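/- arXiv:1807.05869 — 5 statements merged into one kernel-verified Lean document; each statement's English description precedes it below -/
import Mathlib

section
/- Let A and B be (possibly non-standard) graded Artinian algebras over a field k with char k = 0 or char k > j_A + j_B. Suppose ℓ_A ∈ A_1 and ℓ_B ∈ B_1 have Jordan types P_{ℓ_A} = (p_1, …, p_r) and P_{ℓ_B} = (q_1, …, q_s). Then in the tensor product C = A ⊗_k B, the linear form ℓ_C = ℓ_A ⊗ 1 + 1 ⊗ ℓ_B has Jordan type equal to the multiset union over all pairs (i, j) of the partitions (p_i + q_j − 1, p_i + q_j − 3, …, |p_i − q_j| + 1). -/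
/-!
A linear form in a graded algebra acts nilpotently, so each factor has a basis of chains
`v, f v, …, f ^ m v` with `f ^ (m + 1) v = 0`. Chains are independent as soon as their ends
`f ^ m v` are, so a family of chains with independent ends and the right total length is a basis.

For chains of heights `m` and `n` in the factors, `f ⊗ 1 + 1 ⊗ g` is multiplication by `x + y` on
`k[x, y] / (x ^ (m + 1), y ^ (n + 1))`. Write `m = a + t` and `n = b + t`. Dimension counting gives
a nonzero form `F` of degree `t` with `(x + y) ^ (a + b + 1) F = 0`: there are `t + 1` coefficients
and `t` conditions. Moreover `(x + y) ^ (a + b) F ≠ 0`. Indeed, putting `y = 1`, the polynomial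
`(x + 1) ^ (a + b) F` would otherwise miss the monomials `x ^ a, …, x ^ (a + t)`; its `a`-th
derivative would then be divisible by `x ^ (t + 1) (x + 1) ^ b`, hence vanish for degree reasons,
and as `(m + n - t)!` is invertible `(x + 1) ^ (a + b) F` itself would have degree less than `a`,
which is impossible for a nonzero multiple of `(x + 1) ^ (a + b)`. So `F` generates a chain of
length `m + n + 1 - 2 t`. The ends of the chains for different `t` lie in different degrees, and the
lengths for `0 ≤ t ≤ min m n` add up to `(m + 1) (n + 1)`.
-/

/-- `P` is the Jordan type (multiset of Jordan block sizes) of the `k`-linear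
endomorphism `f`, characterized by the ranks of the powers of `f`. -/
def IsJordanTypeOf {k A : Type*} [Field k] [AddCommGroup A] [Module k A]
    (f : A →ₗ[k] A) (P : Multiset ℕ) : Prop :=
  (∀ p ∈ P, 0 < p) ∧
  ∀ j : ℕ, Module.finrank k (LinearMap.range (f ^ j)) = (P.map (fun p => p - j)).sum

open TensorProduct

section

open Polynomial Finset Module
open scoped Nat

section WindowOfCoefficients

variable {R : Type*} [CommRing R]

theorem degree_lt_of_iterate_derivative_eq_zero {F : R[X]} {n N : ℕ} (hF : F.natDegree ≤ N)
    (hN : IsUnit (N ! : R)) (h : derivative^[n] F = 0) : F.degree < n := by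
  by_contra! hn
  have hn' : n ≤ F.natDegree := le_natDegree_of_coe_le_degree hn
  have hunit : IsUnit (F.natDegree.descFactorial n : R) := by
    refine isUnit_of_mul_isUnit_right (x := ((F.natDegree - n)! : R)) ?_
    rw [← Nat.cast_mul, Nat.factorial_mul_descFactorial hn']
    exact hN.natCast_factorial_of_le hF
  have hlead : (F.natDegree.descFactorial n : R) * F.leadingCoeff = 0 := by
    have hcoeff := coeff_iterate_derivative (k := n) F (F.natDegree - n)
    rwa [h, coeff_zero, Nat.sub_add_cancel hn', nsmul_eq_mul, eq_comm] at hcoeff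
  rw [hunit.mul_right_eq_zero, leadingCoeff_eq_zero] at hlead
  simp [hlead] at hn

theorem eq_zero_of_coeff_X_add_one_pow_mul_eq_zero {a b t : ℕ} (hunit : IsUnit ((a + b + t)! : R))
    {F : R[X]} (hF : F.natDegree ≤ t)
    (hcoeff : ∀ i ≤ t, ((X + 1) ^ (a + b) * F).coeff (a + i) = 0) : F = 0 := by
  nontriviality R
  set G : R[X] := (X + 1) ^ (a + b) * F with hG
  have hmonic (n : ℕ) : ((X + 1 : R[X]) ^ n).Monic := by simpa using (monic_X_add_C (1 : R)).pow n
  have hdeg (n : ℕ) : ((X + 1 : R[X]) ^ n).natDegree = n := by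
    have h := (monic_X_add_C (1 : R)).natDegree_pow n
    rwa [natDegree_X_add_C, mul_one, C_1] at h
  have hGdeg : G.natDegree ≤ a + b + t :=
    natDegree_mul_le.trans (add_le_add (hdeg _).le hF)
  -- The `a`-th derivative of `G` is divisible by `X ^ (t + 1)` and by `(X + 1) ^ b`, but has degree
  -- at most `b + t`.
  have hdvd_X : X ^ (t + 1) ∣ derivative^[a] G := by
    refine X_pow_dvd_iff.2 fun i hi => ?_
    rw [coeff_iterate_derivative, add_comm i a, hcoeff i (Nat.lt_succ_iff.1 hi), smul_zero]
  have hdvd_X_add_one : (X + 1) ^ b ∣ derivative^[a] G := by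
    simpa using pow_sub_dvd_iterate_derivative_of_pow_dvd a (Dvd.intro F hG.symm)
  have hcoprime : IsCoprime (X ^ (t + 1) : R[X]) ((X + 1) ^ b) := IsCoprime.pow ⟨-1, 1, by ring⟩
  have hderiv : derivative^[a] G = 0 := by
    by_contra hne
    refine ((monic_X_pow (t + 1)).mul (hmonic b)).not_dvd_of_natDegree_lt hne ?_
      (hcoprime.mul_dvd hdvd_X hdvd_X_add_one)
    rw [(monic_X_pow (t + 1)).natDegree_mul (hmonic b), natDegree_X_pow, hdeg]
    have := natDegree_iterate_derivative G a
    omega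
  have hGlt : G.degree < ((X + 1 : R[X]) ^ (a + b)).degree := by
    rw [degree_eq_natDegree (hmonic _).ne_zero, hdeg]
    exact (degree_lt_of_iterate_derivative_eq_zero hGdeg hunit hderiv).trans_le
      (Nat.cast_le.2 (by omega))
  by_contra hne
  refine (hmonic (a + b)).not_dvd_of_degree_lt ?_ hGlt (Dvd.intro F rfl)
  rwa [hG, Ne, (hmonic _).mul_right_eq_zero_iff]

end WindowOfCoefficients

theorem exists_ne_zero_coeff_mul_eq_zero {k : Type*} [Field k] (G : k[X]) (S : Finset ℕ) :
    ∃ F ≠ 0, F.natDegree ≤ #S ∧ ∀ i ∈ S, (G * F).coeff i = 0 := by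
  let coeffs : degreeLT k (#S + 1) →ₗ[k] S → k :=
    LinearMap.pi fun i => lcoeff k i ∘ₗ LinearMap.mulLeft k G ∘ₗ (degreeLT k (#S + 1)).subtype
  have : FiniteDimensional k (degreeLT k (#S + 1)) :=
    (degreeLTEquiv k (#S + 1)).symm.finiteDimensional
  have hker : LinearMap.ker coeffs ≠ ⊥ := by
    apply LinearMap.ker_ne_bot_of_finrank_lt
    simp [(degreeLTEquiv k (#S + 1)).finrank_eq]
  obtain ⟨⟨F, hFdeg⟩, hF, hne⟩ := Submodule.exists_mem_ne_zero_of_ne_bot hker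
  refine ⟨F, by simpa using hne, ?_, fun i hi => congrFun hF ⟨i, hi⟩⟩
  exact natDegree_le_of_degree_le (Order.lt_succ_iff.1 (mem_degreeLT.1 hFdeg))

theorem homogenize_X_add_one_pow_mul {R : Type*} [CommSemiring R] {F : R[X]} {t : ℕ}
    (hF : F.natDegree ≤ t) (n : ℕ) :
    ((X + 1) ^ n * F).homogenize (n + t) =
      (MvPolynomial.X 0 + MvPolynomial.X 1) ^ n * F.homogenize t := by
  refine homogenize_eq_of_isHomogeneous ?_ (by simp [aeval_homogenize_X_one F hF])
  refine .mul ?_ (isHomogeneous_homogenize F)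
  simpa using ((MvPolynomial.isHomogeneous_X R 0).add (MvPolynomial.isHomogeneous_X R 1)).pow n

theorem exists_primitive_form {k : Type*} [Field k] {a b t : ℕ}
    (hunit : IsUnit ((a + b + t)! : k)) :
    ∃ F : MvPolynomial (Fin 2) k, F.IsHomogeneous t ∧
      (∀ d, d 0 ≤ a + t → d 1 ≤ b + t →
        (((MvPolynomial.X 0 + MvPolynomial.X 1) ^ (a + b + 1) * F).coeff d = 0)) ∧
      ∃ d, d 0 ≤ a + t ∧ d 1 ≤ b + t ∧
        (((MvPolynomial.X 0 + MvPolynomial.X 1) ^ (a + b) * F).coeff d ≠ 0) := by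
  obtain ⟨F, hne, hdeg, hF⟩ :=
    exists_ne_zero_coeff_mul_eq_zero ((X + 1 : k[X]) ^ (a + b + 1)) (Ioc a (a + t))
  rw [Nat.card_Ioc, Nat.add_sub_cancel_left] at hdeg
  refine ⟨F.homogenize t, isHomogeneous_homogenize F, fun d h0 h1 => ?_, ?_⟩
  · rw [← homogenize_X_add_one_pow_mul hdeg, coeff_homogenize]
    split_ifs with hd
    · exact hF _ (mem_Ioc.2 ⟨by omega, h0⟩)
    · rfl
  · by_contra! hzero
    refine hne (eq_zero_of_coeff_X_add_one_pow_mul_eq_zero hunit hdeg fun i hi => ?_)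
    have h := hzero (fun₀ | 0 => a + i | 1 => b + (t - i)) (by simpa using hi) (by simp)
    rw [← homogenize_X_add_one_pow_mul hdeg, coeff_homogenize] at h
    simpa [show a + i + (b + (t - i)) = a + b + t by omega] using h

theorem sum_map_tsub_add_sum_map_tsub (P : Multiset ℕ) (j : ℕ) :
    (P.map fun p => p - j).sum + (P.map fun p => p - (j + 2)).sum =
      2 * (P.map fun p => p - (j + 1)).sum + P.count (j + 1) := by
  induction P using Multiset.induction_on with
  | empty => simp
  | cons p P ih =>
    simp only [Multiset.map_cons, Multiset.sum_cons, Multiset.count_cons]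
    split_ifs <;> omega

namespace IsJordanTypeOf

variable {k V : Type*} [Field k] [AddCommGroup V] [Module k V] {f : End k V} {P Q : Multiset ℕ}

theorem pow_eq_zero_iff [FiniteDimensional k V] (hP : IsJordanTypeOf f P) {j : ℕ} :
    f ^ j = 0 ↔ ∀ p ∈ P, p ≤ j := by
  rw [← LinearMap.range_eq_bot, ← Submodule.finrank_eq_zero, hP.2 j, Multiset.sum_eq_zero_iff]
  simp [Nat.sub_eq_zero_iff_le]

theorem isNilpotent [FiniteDimensional k V] (hP : IsJordanTypeOf f P) : IsNilpotent f :=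
  ⟨P.sum, hP.pow_eq_zero_iff.2 fun _ hp => Multiset.le_sum_of_mem hp⟩

theorem unique (hP : IsJordanTypeOf f P) (hQ : IsJordanTypeOf f Q) : P = Q := by
  ext p
  rcases p with _ | j
  · rw [Multiset.count_eq_zero_of_notMem fun h => (hP.1 0 h).false,
      Multiset.count_eq_zero_of_notMem fun h => (hQ.1 0 h).false]
  · have h := sum_map_tsub_add_sum_map_tsub P j
    simp only [← hP.2, hQ.2, sum_map_tsub_add_sum_map_tsub Q j] at h
    exact (Nat.add_left_cancel h).symm

end IsJordanTypeOf

theorem exists_linearIndependent_sumElim {k V ι : Type*} [DivisionRing k] [AddCommGroup V]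
    [Module k V] [FiniteDimensional k V] {v : ι → V} (hv : LinearIndependent k v) :
    ∃ (n : ℕ) (w : Fin n → V), LinearIndependent k (Sum.elim v w) ∧
      Nat.card ι + n = finrank k V := by
  obtain ⟨C, hC⟩ := (Submodule.span k (Set.range v)).exists_isCompl
  refine ⟨finrank k C, fun i => finBasis k C i, ?_, ?_⟩
  · refine hv.sum_type ((finBasis k C).linearIndependent.map' C.subtype C.ker_subtype) ?_
    refine hC.disjoint.mono_right (Submodule.span_le.2 ?_)
    rintro _ ⟨i, rfl⟩
    exact (finBasis k C i).2
  · have := hv.finite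
    cases nonempty_fintype ι
    rw [Nat.card_eq_fintype_card, ← finrank_span_eq_card hv, Submodule.finrank_add_eq_of_isCompl hC]

theorem coe_pow_apply_of_coe_apply_eq {R V : Type*} [Semiring R] [AddCommMonoid V] [Module R V]
    {p : Submodule R V} {f : End R V} {f' : End R p} (h : ∀ x, (f' x : V) = f x) (n : ℕ) (x : p) :
    ((f' ^ n) x : V) = (f ^ n) x := by
  have hcomm : f ∘ₗ p.subtype = p.subtype ∘ₗ f' := LinearMap.ext fun x => (h x).symm
  exact (LinearMap.congr_fun (End.commute_pow_left_of_commute hcomm n) x).symm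

theorem linearIndependent_pow_apply {R M ι : Type*} [Ring R] [AddCommGroup M] [Module R M]
    [Finite ι] {f : End R M} {m : ι → ℕ} {v : ι → M} (hv : ∀ i, (f ^ (m i + 1)) (v i) = 0)
    (hend : LinearIndependent R fun i => (f ^ m i) (v i)) :
    LinearIndependent R fun x : Σ i, Fin (m i + 1) => (f ^ (x.2 : ℕ)) (v x.1) := by
  classical
  cases nonempty_fintype ι
  rw [Fintype.linearIndependent_iff] at hend ⊢
  intro c hc
  by_contra! hne
  obtain ⟨x, hx, hmax⟩ := exists_max_image (univ.filter fun x => c x ≠ 0)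
    (fun x => m x.1 - (x.2 : ℕ)) (hne.imp (by simp))
  -- Applying `f ^ r` turns the vectors farthest from their ends into ends and kills those closer.
  obtain ⟨r, hr⟩ := Nat.exists_eq_add_of_le' (Nat.lt_succ_iff.1 x.2.isLt)
  have hterm (i : ι) (a : Fin (m i + 1)) : c ⟨i, a⟩ • (f ^ r) ((f ^ (a : ℕ)) (v i)) =
      (if r + a = m i then c ⟨i, a⟩ else 0) • (f ^ m i) (v i) := by
    rw [← End.mul_apply, ← pow_add]
    rcases lt_trichotomy (r + a) (m i) with h | h | h
    · have hzero : c ⟨i, a⟩ = 0 := by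
        by_contra hca
        have := hmax ⟨i, a⟩ (by simpa using hca)
        dsimp only at this
        omega
      simp [hzero]
    · simp [h]
    · rw [if_neg h.ne', End.pow_map_zero_of_le h (hv i), smul_zero, zero_smul]
  have hsum : ∑ i, (∑ a : Fin (m i + 1), if r + a = m i then c ⟨i, a⟩ else 0) •
      (f ^ m i) (v i) = 0 := by
    simp_rw [Finset.sum_smul, ← hterm, ← Fintype.sum_sigma']
    simpa only [map_sum, map_smul, map_zero] using congrArg (f ^ r) hc
  have hcx := hend _ hsum x.1
  rw [Fintype.sum_eq_single x.2 fun a ha => if_neg (by omega), if_pos (by omega)] at hcx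
  simp [hcx] at hx

/-- A basis of `V` made of the chains `gen i, f (gen i), …, f ^ m i (gen i)`, each of which `f`
sends to zero after its last term. Chains are measured by their height `m i` rather than by their
number of elements `m i + 1`, which makes every chain nonempty and avoids subtractions. -/
structure JordanBasis {R V ι : Type*} [Ring R] [AddCommGroup V] [Module R V] (f : End R V)
    (m : ι → ℕ) where
  gen : ι → V
  pow_succ_gen (i : ι) : (f ^ (m i + 1)) (gen i) = 0
  linearIndependent :
    LinearIndependent R fun x : Σ i, Fin (m i + 1) => (f ^ (x.2 : ℕ)) (gen x.1)
  top_le_span :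
    ⊤ ≤ Submodule.span R (Set.range fun x : Σ i, Fin (m i + 1) => (f ^ (x.2 : ℕ)) (gen x.1))

namespace JordanBasis

section Ring

variable {R V ι : Type*} [Ring R] [AddCommGroup V] [Module R V] {f : End R V} {m : ι → ℕ}
  (J : JordanBasis f m)

/-- The vectors of all chains as a basis. -/
noncomputable def basis : Basis (Σ i, Fin (m i + 1)) R V := .mk J.linearIndependent J.top_le_span

theorem basis_apply (x : Σ i, Fin (m i + 1)) : J.basis x = (f ^ (x.2 : ℕ)) (J.gen x.1) :=
  Basis.mk_apply ..

theorem basis_repr_pow_gen [DecidableEq ι] (i : ι) (n : ℕ) (x : Σ i, Fin (m i + 1)) :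
    J.basis.repr ((f ^ n) (J.gen i)) x = if i = x.1 ∧ n = x.2 then 1 else 0 := by
  obtain ⟨j, a⟩ := x
  rcases Nat.lt_or_ge n (m i + 1) with hn | hn
  · rw [← J.basis_apply ⟨i, ⟨n, hn⟩⟩, Basis.repr_self, Finsupp.single_apply]
    congr 1
    ext1
    rw [Sigma.mk.injEq]
    refine and_congr_right ?_
    rintro rfl
    simp [Fin.ext_iff]
  · rw [End.pow_map_zero_of_le hn (J.pow_succ_gen i), map_zero, Finsupp.zero_apply,
      if_neg]
    rintro ⟨rfl, rfl⟩
    exact not_lt.2 hn a.isLt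

theorem range_pow (j : ℕ) :
    LinearMap.range (f ^ j) = Submodule.span R
      (Set.range fun x : Σ i, Fin (m i + 1 - j) => J.basis ⟨x.1, x.2 + j, by omega⟩) := by
  rw [LinearMap.range_eq_map, ← J.basis.span_eq, Submodule.map_span, ← Set.range_comp]
  apply le_antisymm <;> rw [Submodule.span_le, Set.range_subset_iff]
  · intro x
    rw [Function.comp_apply, basis_apply, ← End.mul_apply, ← pow_add]
    rcases Nat.lt_or_ge (j + x.2) (m x.1 + 1) with h | h
    · exact Submodule.subset_span ⟨⟨x.1, x.2, by omega⟩, by simp [basis_apply, add_comm]⟩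
    · simp [End.pow_map_zero_of_le h (J.pow_succ_gen x.1)]
  · intro x
    refine Submodule.subset_span ⟨⟨x.1, x.2, by omega⟩, ?_⟩
    simp [basis_apply, ← End.mul_apply, ← pow_add, add_comm]

end Ring

theorem sum_height_add_one {R V ι : Type*} [Ring R] [StrongRankCondition R] [AddCommGroup V]
    [Module R V] [Fintype ι] {f : End R V} {m : ι → ℕ} (J : JordanBasis f m) :
    ∑ i, (m i + 1) = finrank R V := by
  simpa using (finrank_eq_card_basis J.basis).symm

section DivisionRing

variable {k V ι : Type*} [DivisionRing k] [AddCommGroup V] [Module k V] {f : End k V} {m : ι → ℕ}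

/-- A Jordan basis from chains whose ends are linearly independent and whose lengths add up to the
dimension. -/
def ofLinearIndependentEnds [Fintype ι] [FiniteDimensional k V] (v : ι → V)
    (hv : ∀ i, (f ^ (m i + 1)) (v i) = 0)
    (hend : LinearIndependent k fun i => (f ^ m i) (v i)) (hcard : ∑ i, (m i + 1) = finrank k V) :
    JordanBasis f m where
  gen := v
  pow_succ_gen := hv
  linearIndependent := linearIndependent_pow_apply hv hend
  top_le_span := ((linearIndependent_pow_apply hv hend).span_eq_top_of_card_eq_finrank'
    (by simpa using hcard)).ge

theorem exists_of_range [FiniteDimensional k V] {f' : End k (LinearMap.range f)}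
    (hf' : ∀ x, (f' x : V) = f x) (J : JordanBasis f' m) :
    ∃ n : ℕ, Nonempty (JordanBasis f (Sum.elim (fun i => m i + 1) fun _ : Fin n => 0)) := by
  have hpow := coe_pow_apply_of_coe_apply_eq hf'
  choose v hv using fun i => LinearMap.mem_range.1 (J.gen i).2
  have hfv (i : ι) (n : ℕ) : (f ^ (n + 1)) (v i) = (f ^ n) (J.gen i) := by
    rw [pow_succ, End.mul_apply, hv]
  have hkill (i : ι) : (f ^ (m i + 1)) (J.gen i) = 0 := by
    rw [← hpow, J.pow_succ_gen, ZeroMemClass.coe_zero]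
  -- Completing the ends `e i` to a basis of `ker f` supplies the new chains of height `0`.
  let e (i : ι) : LinearMap.ker f := ⟨(f ^ m i) (J.gen i), by
    rw [LinearMap.mem_ker, ← End.mul_apply, ← pow_succ', hkill]⟩
  have he : LinearIndependent k e := by
    refine LinearIndependent.of_comp (LinearMap.ker f).subtype ?_
    have h := (J.linearIndependent.comp (fun i : ι => ⟨i, Fin.last (m i)⟩)
      fun i j h => (Sigma.mk.inj h).1).map' (LinearMap.range f).subtype (Submodule.ker_subtype _)
    simpa only [Function.comp_def, Submodule.subtype_apply, hpow, Fin.val_last, e] using h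
  have := he.finite
  cases nonempty_fintype ι
  obtain ⟨n, w, hw, hcard⟩ := exists_linearIndependent_sumElim he
  refine ⟨n, ⟨ofLinearIndependentEnds (Sum.elim v fun j => (w j : V)) ?_ ?_ ?_⟩⟩
  · rintro (i | j)
    · exact (hfv i _).trans (hkill i)
    · simp
  · have hends : (fun x : ι ⊕ Fin n => (f ^ Sum.elim (fun i => m i + 1) (fun _ : Fin n => 0) x)
        (Sum.elim v (fun j => (w j : V)) x)) = (LinearMap.ker f).subtype ∘ Sum.elim e w := by
      ext (i | j)
      · exact hfv i _
      · simp
    rw [hends]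
    exact hw.map' (LinearMap.ker f).subtype (Submodule.ker_subtype _)
  · rw [← LinearMap.finrank_range_add_finrank_ker f, ← hcard, Nat.card_eq_fintype_card,
      ← J.sum_height_add_one]
    simp [Finset.sum_add_distrib, add_assoc]

end DivisionRing

theorem isJordanTypeOf {k V ι : Type*} [Field k] [AddCommGroup V] [Module k V] [Fintype ι]
    {f : End k V} {m : ι → ℕ} (J : JordanBasis f m) :
    IsJordanTypeOf f (univ.val.map fun i => m i + 1) := by
  refine ⟨by simp, fun j => ?_⟩
  rw [J.range_pow, finrank_span_eq_card]
  · simp only [Fintype.card_sigma, Fintype.card_fin, Multiset.map_map]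
    rfl
  · refine J.basis.linearIndependent.comp _ ?_
    rintro ⟨i, a⟩ ⟨i', a'⟩ h
    rw [Sigma.mk.injEq] at h
    obtain ⟨rfl, h⟩ := h
    simpa [Fin.ext_iff] using h

end JordanBasis

theorem exists_jordanBasis {k V : Type*} [DivisionRing k] [AddCommGroup V] [Module k V]
    [FiniteDimensional k V] {f : End k V} (hf : IsNilpotent f) :
    ∃ (ι : Type) (_ : Fintype ι) (m : ι → ℕ), Nonempty (JordanBasis f m) := by
  obtain ⟨n, hn⟩ := hf
  induction n generalizing V with
  | zero =>
    have : Subsingleton V := subsingleton_of_forall_eq 0 fun x => by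
      simpa using LinearMap.congr_fun hn x
    exact ⟨Empty, inferInstance, Empty.elim, ⟨.ofLinearIndependentEnds Empty.elim (by simp)
      linearIndependent_empty_type (by simp [finrank_zero_of_subsingleton])⟩⟩
  | succ n ih =>
    have hmem (x : V) (_ : x ∈ LinearMap.range f) : f x ∈ LinearMap.range f := ⟨x, rfl⟩
    have hrange : f.restrict hmem ^ n = 0 := by
      ext ⟨_, x, rfl⟩
      rw [coe_pow_apply_of_coe_apply_eq fun _ => rfl]
      simpa [pow_succ] using LinearMap.congr_fun hn x
    obtain ⟨ι, _, m, ⟨J⟩⟩ := ih hrange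
    obtain ⟨r, hr⟩ := J.exists_of_range fun _ => rfl
    exact ⟨ι ⊕ Fin r, inferInstance, _, hr⟩

theorem linearIndependent_of_repr_ne_zero {R V ι κ : Type*} [Ring R] [NoZeroDivisors R]
    [AddCommGroup V] [Module R V] (b : Basis κ R V) {v : ι → V} (z : ι → κ)
    (hz : ∀ i, b.repr (v i) (z i) ≠ 0) (hz' : ∀ i j, b.repr (v j) (z i) ≠ 0 → i = j) :
    LinearIndependent R v := by
  rw [linearIndependent_iff']
  intro s c hc i hi
  have hsum : ∑ j ∈ s, c j * b.repr (v j) (z i) = 0 := by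
    simpa [Finsupp.finsetSum_apply] using DFunLike.congr_fun (congrArg b.repr hc) (z i)
  rw [sum_eq_single_of_mem i hi fun j _ hji => ?_] at hsum
  · exact (mul_eq_zero.1 hsum).resolve_right (hz i)
  · rw [not_not.1 (mt (hz' i j) hji.symm), mul_zero]

theorem sum_range_min_add_one (m n : ℕ) :
    ∑ t ∈ range (min m n + 1), ((m - t) + (n - t) + 1) = (m + 1) * (n + 1) := by
  wlog h : m ≤ n generalizing m n
  · simpa only [min_comm, add_comm, mul_comm] using this n m (by omega)
  obtain ⟨d, rfl⟩ := Nat.exists_eq_add_of_le h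
  rw [min_eq_left h]
  clear h
  induction m with
  | zero => simp
  | succ m ih =>
    rw [sum_range_succ', add_right_comm m 1 d]
    simp only [Nat.add_sub_add_right, ih, Nat.sub_zero]
    ring

section KroneckerSum

variable {R V W : Type*} [CommSemiring R] [AddCommMonoid V] [Module R V] [AddCommMonoid W]
  [Module R W]

/-- The Kronecker sum `f ⊗ 1 + 1 ⊗ g`. -/
noncomputable def kroneckerSum (f : End R V) (g : End R W) : End R (V ⊗[R] W) :=
  f.rTensor W + g.lTensor V

theorem kroneckerSum_mulLeft {A B : Type*} [Semiring A] [Algebra R A] [Semiring B] [Algebra R B]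
    (a : A) (b : B) :
    kroneckerSum (LinearMap.mulLeft R a) (LinearMap.mulLeft R b) =
      LinearMap.mulLeft R (a ⊗ₜ[R] (1 : B) + (1 : A) ⊗ₜ[R] b) := by
  ext x y
  simp [kroneckerSum, add_mul]

/-- The `R`-linear map sending a polynomial `F` in the two variables `X 0`, `X 1` to
`F(f ⊗ 1, 1 ⊗ g) (v ⊗ w)`. -/
noncomputable def tensorEval (f : End R V) (g : End R W) (v : V) (w : W) :
    MvPolynomial (Fin 2) R →ₗ[R] V ⊗[R] W :=
  (MvPolynomial.basisMonomials (Fin 2) R).constr R fun d => (f ^ d 0) v ⊗ₜ (g ^ d 1) w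

variable (f : End R V) (g : End R W) (v : V) (w : W)

theorem tensorEval_monomial (d : Fin 2 →₀ ℕ) (r : R) :
    tensorEval f g v w (MvPolynomial.monomial d r) = r • ((f ^ d 0) v ⊗ₜ (g ^ d 1) w) := by
  simp [tensorEval, Basis.constr_apply, MvPolynomial.basisMonomials]

theorem tensorEval_X_add_X_mul (F : MvPolynomial (Fin 2) R) :
    tensorEval f g v w ((MvPolynomial.X 0 + MvPolynomial.X 1) * F) =
      kroneckerSum f g (tensorEval f g v w F) := by
  induction F using MvPolynomial.induction_on' with
  | monomial d r =>
    simp [add_mul, MvPolynomial.X, MvPolynomial.monomial_mul, tensorEval_monomial, kroneckerSum,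
      pow_add, TensorProduct.smul_tmul']
  | add F G hF hG => rw [mul_add, map_add, hF, hG, map_add, map_add]

theorem tensorEval_X_add_X_pow_mul (n : ℕ) (F : MvPolynomial (Fin 2) R) :
    tensorEval f g v w ((MvPolynomial.X 0 + MvPolynomial.X 1) ^ n * F) =
      (kroneckerSum f g ^ n) (tensorEval f g v w F) := by
  induction n with
  | zero => simp
  | succ n ih => rw [pow_succ', mul_assoc, tensorEval_X_add_X_mul, ih, pow_succ', End.mul_apply]

end KroneckerSum

namespace JordanBasis

theorem tensorProduct_repr_tensorEval {R V W ι κ : Type*} [CommRing R] [AddCommGroup V]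
    [Module R V] [AddCommGroup W] [Module R W] [DecidableEq ι] [DecidableEq κ] {f : End R V}
    {g : End R W} {m : ι → ℕ} {n : κ → ℕ} (J : JordanBasis f m) (K : JordanBasis g n) (i : ι)
    (j : κ) (F : MvPolynomial (Fin 2) R) (x : Σ i, Fin (m i + 1)) (y : Σ j, Fin (n j + 1)) :
    (J.basis.tensorProduct K.basis).repr (tensorEval f g (J.gen i) (K.gen j) F) (x, y) =
      if i = x.1 ∧ j = y.1 then F.coeff (fun₀ | 0 => (x.2 : ℕ) | 1 => (y.2 : ℕ)) else 0 := by
  induction F using MvPolynomial.induction_on' with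
  | monomial d r =>
    have hd : d = (fun₀ | 0 => (x.2 : ℕ) | 1 => (y.2 : ℕ)) ↔ d 0 = x.2 ∧ d 1 = y.2 := by
      simp [Finsupp.ext_iff, Fin.forall_fin_two]
    rw [tensorEval_monomial, map_smul, Finsupp.smul_apply, Basis.tensorProduct_repr_tmul_apply,
      basis_repr_pow_gen, basis_repr_pow_gen, MvPolynomial.coeff_monomial]
    simp only [hd]
    split_ifs <;> simp_all
  | add F G hF hG =>
    rw [map_add, map_add, Finsupp.add_apply, hF, hG, MvPolynomial.coeff_add]
    split_ifs <;> simp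

section Tensor

variable {k V W ι κ : Type*} [Field k] [AddCommGroup V] [Module k V] [AddCommGroup W]
  [Module k W] {f : End k V} {g : End k W} {m : ι → ℕ} {n : κ → ℕ}

theorem exists_primitive_vector (J : JordanBasis f m) (K : JordanBasis g n) {i : ι} {j : κ}
    {a b t : ℕ} (hi : m i = a + t) (hj : n j = b + t)
    (hunit : IsUnit ((a + b + t)! : k)) :
    ∃ (v : V ⊗[k] W) (z : (Σ i, Fin (m i + 1)) × Σ j, Fin (n j + 1)),
      (kroneckerSum f g ^ (a + b + 1)) v = 0 ∧
      (J.basis.tensorProduct K.basis).repr ((kroneckerSum f g ^ (a + b)) v) z ≠ 0 ∧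
      ∀ z', (J.basis.tensorProduct K.basis).repr ((kroneckerSum f g ^ (a + b)) v) z' ≠ 0 →
        i = z'.1.1 ∧ j = z'.2.1 ∧ (z'.1.2 + z'.2.2 : ℕ) = a + b + t := by
  classical
  obtain ⟨F, hF, hzero, d, hd0, hd1, hd⟩ :=
    exists_primitive_form hunit
  refine ⟨tensorEval f g (J.gen i) (K.gen j) F, (⟨i, d 0, by omega⟩, ⟨j, d 1, by omega⟩), ?_⟩
  simp only [← tensorEval_X_add_X_pow_mul]
  refine ⟨?_, ?_, ?_⟩
  · refine (J.basis.tensorProduct K.basis).ext_elem fun ⟨x, y⟩ => ?_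
    rw [tensorProduct_repr_tensorEval, map_zero, Finsupp.zero_apply, ite_eq_right_iff]
    rintro ⟨rfl, rfl⟩
    exact hzero _ (by simp; omega) (by simp; omega)
  · rw [tensorProduct_repr_tensorEval, if_pos ⟨rfl, rfl⟩]
    have hd' : (fun₀ | 0 => d 0 | 1 => d 1) = d := by
      simp [Finsupp.ext_iff, Fin.forall_fin_two]
    rwa [hd']
  · intro ⟨x, y⟩ hxy
    rw [tensorProduct_repr_tensorEval] at hxy
    obtain ⟨⟨hx, hy⟩, hcoeff⟩ := ite_ne_right_iff.1 hxy
    have hX := (MvPolynomial.isHomogeneous_X k (0 : Fin 2)).add (MvPolynomial.isHomogeneous_X k 1)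
    exact ⟨hx, hy, by
      simpa [Finsupp.weight_apply, Finsupp.sum_fintype] using ((hX.pow (a + b)).mul hF) hcoeff⟩

theorem nonempty_kroneckerSum [Finite ι] [Finite κ] (J : JordanBasis f m) (K : JordanBasis g n)
    (hunit : ∀ i j, IsUnit ((m i + n j)! : k)) :
    Nonempty (JordanBasis (kroneckerSum f g)
      fun s : Σ (i : ι) (j : κ), Fin (min (m i) (n j) + 1) =>
        (m s.1 - s.2.2) + (n s.2.1 - s.2.2)) := by
  have := Module.Finite.of_basis J.basis
  have := Module.Finite.of_basis K.basis
  cases nonempty_fintype ι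
  cases nonempty_fintype κ
  choose v z hv hz hzv using fun s : Σ (i : ι) (j : κ), Fin (min (m i) (n j) + 1) =>
    J.exists_primitive_vector K (i := s.1) (j := s.2.1) (a := m s.1 - s.2.2)
      (b := n s.2.1 - s.2.2) (t := s.2.2) (by omega) (by omega)
      ((hunit s.1 s.2.1).natCast_factorial_of_le (by omega))
  refine ⟨.ofLinearIndependentEnds v hv ?_ ?_⟩
  · refine linearIndependent_of_repr_ne_zero (J.basis.tensorProduct K.basis) z hz fun s s' h => ?_
    obtain ⟨hi, hj, ht⟩ := hzv s (z s) (hz s)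
    obtain ⟨hi', hj', ht'⟩ := hzv s' (z s) h
    obtain ⟨i, j, t⟩ := s
    obtain ⟨i', j', t'⟩ := s'
    obtain rfl : i = i' := hi.trans hi'.symm
    obtain rfl : j = j' := hj.trans hj'.symm
    obtain rfl : t = t' := Fin.ext (by dsimp only at ht ht'; omega)
    rfl
  · have hsum (i : ι) (j : κ) : ∑ t : Fin (min (m i) (n j) + 1), (m i - t + (n j - t) + 1) =
        (m i + 1) * (n j + 1) := by
      rw [Fin.sum_univ_eq_sum_range fun t => m i - t + (n j - t) + 1, sum_range_min_add_one]
    simp_rw [Fintype.sum_sigma, hsum, ← sum_mul_sum]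
    rw [J.sum_height_add_one, K.sum_height_add_one, finrank_tensorProduct]

end Tensor

end JordanBasis

theorem isUnit_natCast_factorial {k : Type*} [Field k] {n : ℕ}
    (h : ringChar k = 0 ∨ n < ringChar k) : IsUnit (n ! : k) := by
  rw [isUnit_iff_ne_zero, Ne, ringChar.spec]
  rcases h with h | h
  · simpa [h] using n.factorial_ne_zero
  · rw [(CharP.char_is_prime_or_zero k (ringChar k)).resolve_right (by omega) |>.dvd_factorial]
    exact h.not_ge

theorem map_univ_val_sigma {α γ : Type*} {β : α → Type*} [Fintype α] [∀ a, Fintype (β a)]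
    (h : (Σ a, β a) → γ) :
    univ.val.map h = univ.val.bind fun a => univ.val.map fun b => h ⟨a, b⟩ := by
  change (univ.val.sigma fun _ => univ.val).map h = _
  simp [Multiset.sigma, Multiset.map_bind]

theorem map_univ_val_fin {γ : Type*} (n : ℕ) (h : ℕ → γ) :
    (univ.val.map fun t : Fin n => h t) = (Multiset.range n).map h := by
  rw [Fin.univ_val_map, Multiset.range, Multiset.map_coe, List.ofFn_eq_map,
    ← List.map_coe_finRange_eq_range, List.map_map, Function.comp_def]

theorem jordan_type_tensor_product_general {k V W : Type*} [Field k] [AddCommGroup V] [Module k V]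
    [AddCommGroup W] [Module k W] [FiniteDimensional k V] [FiniteDimensional k W]
    {f : End k V} {g : End k W} {P Q : Multiset ℕ} (hP : IsJordanTypeOf f P)
    (hQ : IsJordanTypeOf g Q)
    (hchar : ringChar k = 0 ∨ ∀ p ∈ P, ∀ q ∈ Q, p + q < ringChar k + 2) :
    IsJordanTypeOf (kroneckerSum f g)
      (P.bind fun p => Q.bind fun q =>
        (Multiset.range (min p q)).map fun t => p + q - 1 - 2 * t) := by
  obtain ⟨ι, _, m, ⟨J⟩⟩ := exists_jordanBasis hP.isNilpotent
  obtain ⟨κ, _, n, ⟨K⟩⟩ := exists_jordanBasis hQ.isNilpotent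
  obtain rfl := hP.unique J.isJordanTypeOf
  obtain rfl := hQ.unique K.isJordanTypeOf
  have hunit (i : ι) (j : κ) : IsUnit ((m i + n j)! : k) := by
    refine isUnit_natCast_factorial (hchar.imp_right fun h => ?_)
    have := h (m i + 1) (by simp) (n j + 1) (by simp)
    omega
  obtain ⟨L⟩ := J.nonempty_kroneckerSum K hunit
  convert L.isJordanTypeOf using 1
  simp_rw [Multiset.bind_map, map_univ_val_sigma]
  refine Multiset.bind_congr fun i _ => Multiset.bind_congr fun j _ => ?_
  rw [map_univ_val_fin _ fun t => m i - t + (n j - t) + 1, Nat.add_min_add_right]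
  exact Multiset.map_congr rfl fun t ht => by rw [Multiset.mem_range] at ht; omega

theorem IsJordanTypeOf.le_add_one_of_graded {k A : Type*} [Field k] [Ring A] [Algebra k A]
    [FiniteDimensional k A] (𝒜 : ℕ → Submodule k A) [GradedAlgebra 𝒜] {j : ℕ}
    (hj : ∀ i, j < i → 𝒜 i = ⊥) {a : A} (ha : a ∈ 𝒜 1) {P : Multiset ℕ}
    (hP : IsJordanTypeOf (LinearMap.mulLeft k a) P) : ∀ p ∈ P, p ≤ j + 1 := by
  rw [← hP.pow_eq_zero_iff, LinearMap.pow_mulLeft, LinearMap.mulLeft_eq_zero_iff,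
    ← Submodule.mem_bot k, ← hj (j + 1) j.lt_succ_self]
  simpa using SetLike.pow_mem_graded (j + 1) ha

end

/-- Let `A` and `B` be (possibly non-standard) graded Artinian algebras over a
field `k` with `char k = 0` or `char k > j_A + j_B`.  Suppose `ℓ_A ∈ A_1` and
`ℓ_B ∈ B_1` have Jordan types `P = (p_1, …, p_r)` and `Q = (q_1, …, q_s)`.
Then in the tensor product `C = A ⊗_k B`, the linear form
`ℓ_C = ℓ_A ⊗ 1 + 1 ⊗ ℓ_B` has Jordan type equal to the multiset union over all
pairs `(i, j)` of the partitions `(p_i + q_j − 1, p_i + q_j − 3, …, |p_i − q_j| + 1)`. -/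
theorem jordan_type_tensor_product
    {k A B : Type} [Field k] [CommRing A] [Algebra k A] [CommRing B] [Algebra k B]
    (𝒜 : ℕ → Submodule k A) [GradedAlgebra 𝒜] [FiniteDimensional k A]
    (hconnA : 𝒜 0 = Submodule.span k {(1 : A)})
    (ℬ : ℕ → Submodule k B) [GradedAlgebra ℬ] [FiniteDimensional k B]
    (hconnB : ℬ 0 = Submodule.span k {(1 : B)})
    (jA jB : ℕ) (hjA : 𝒜 jA ≠ ⊥) (hjA' : ∀ i, jA < i → 𝒜 i = ⊥)
    (hjB : ℬ jB ≠ ⊥) (hjB' : ∀ i, jB < i → ℬ i = ⊥)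
    (hchar : ringChar k = 0 ∨ jA + jB < ringChar k)
    (ℓA : A) (hℓA : ℓA ∈ 𝒜 1) (ℓB : B) (hℓB : ℓB ∈ ℬ 1)
    (P Q : Multiset ℕ)
    (hP : IsJordanTypeOf (LinearMap.mulLeft k ℓA) P)
    (hQ : IsJordanTypeOf (LinearMap.mulLeft k ℓB) Q) :
    IsJordanTypeOf
      (LinearMap.mulLeft k ((ℓA ⊗ₜ[k] (1 : B)) + ((1 : A) ⊗ₜ[k] ℓB)))
      (P.bind fun p => Q.bind fun q =>
        (Multiset.range (min p q)).map (fun t => p + q - 1 - 2 * t)) := by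
  rw [← kroneckerSum_mulLeft]
  exact jordan_type_tensor_product_general hP hQ <| hchar.imp_right fun h p hp q hq =>
    (add_le_add (hP.le_add_one_of_graded 𝒜 hjA' hℓA p hp)
      (hQ.le_add_one_of_graded ℬ hjB' hℓB q hq)).trans_lt (by omega)
end

section
/- Let A and B be graded Artinian algebras over a field k with symmetric Hilbert functions, and assume char k = 0 or char k > j_A + j_B. If x ∈ A_1 and y ∈ B_1 are strong Lefschetz elements for A and B respectively, then ℓ = x ⊗ 1 + 1 ⊗ y ∈ C_1 is a strong Lefschetz element for the tensor product algebra C = A ⊗_k B. -/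
/-!
The proof is `sl₂` representation theory, arranged so that it works in every characteristic larger
than the socle degree of the tensor product.

Suppose that `E` raises the degree of a graded space `W 0, …, W n` by one, and that there is an `F`
lowering it by one such that `E F - F E` is the scalar `i - j` on `W i` whenever `i + j = n`. If
`1, …, n` are invertible, the commutation formula for `F` and `E ^ q` makes `E ^ m` injective on
`W i` for `2 i + m = n`. The situation is symmetric under exchanging `E` with `F` and reversing the
grading, so `W i` and `W (i + m)` have the same dimension and `E ^ m` is a bijection between them.

Conversely, if all these maps `E ^ m` are bijective, then such an `F` exists in any characteristic:
`W` is spanned by the strings `u, E u, …, E ^ m u` with `u ∈ W i` and `E ^ (m + 1) u = 0`, and on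
such a string `F` has to be `E ^ (q + 1) u ↦ (q + 1) (m - q) E ^ q u`.

The condition on `F` is additive over tensor products: `F ⊗ 1 + 1 ⊗ F'` works for
`E ⊗ 1 + 1 ⊗ E'`, because the scalars on `A_i` and on `B_j` add up.
-/

/-- A linear form `ℓ` is strong Lefschetz for the graded algebra `A` with
grading `𝒜` if `ℓ ∈ 𝒜 1` and all multiplication maps `×ℓ^j : 𝒜 i → 𝒜 (i+j)`
have maximal rank. -/
def IsSL {k A : Type*} [Field k] [CommRing A] [Algebra k A]
    (𝒜 : ℕ → Submodule k A) (ℓ : A) : Prop :=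
  ℓ ∈ 𝒜 1 ∧ ∀ i j : ℕ,
    Module.finrank k ((𝒜 i).map (LinearMap.mulLeft k (ℓ ^ j))) =
      min (Module.finrank k (𝒜 i)) (Module.finrank k (𝒜 (i + j)))

open TensorProduct

/-- The grading on the tensor product `C = A ⊗_k B` of two graded algebras:
`C_d = ⊕_{i+j=d} A_i ⊗ B_j`. -/
noncomputable def tensorGrading {k A B : Type*} [Field k]
    [CommRing A] [Algebra k A] [CommRing B] [Algebra k B]
    (𝒜 : ℕ → Submodule k A) (ℬ : ℕ → Submodule k B) (d : ℕ) :
    Submodule k (A ⊗[k] B) :=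
  ⨆ (p : ℕ × ℕ) (_ : p.1 + p.2 = d),
    Submodule.map₂ (TensorProduct.mk k A B) (𝒜 p.1) (ℬ p.2)

section DegreeOneOperators

variable {k V : Type*} [CommRing k] [AddCommGroup V] [Module k V]

/-- A degree-one operator `E` on the graded module `W 0, …, W n`. The values `W i` with `n < i` are
ignored, which keeps the notion stable under the reversal `i ↦ n - i`. -/
structure IsRaising (W : ℕ → Submodule k V) (n : ℕ) (E : Module.End k V) : Prop where
  raise : ∀ i < n, ∀ v ∈ W i, E v ∈ W (i + 1)
  raise_last : ∀ v ∈ W n, E v = 0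

/-- A pair of operators raising and lowering the degree which, up to the sign of `F`, generate an
action of `sl₂` on `W 0 ⊕ ⋯ ⊕ W n` with `W i` of weight `i - (n - i)`. -/
structure IsSl2Pair (W : ℕ → Submodule k V) (n : ℕ) (E F : Module.End k V) : Prop
    extends IsRaising W n E where
  lower : ∀ i < n, ∀ v ∈ W (i + 1), F v ∈ W i
  lower_zero : ∀ v ∈ W 0, F v = 0
  comm : ∀ i j, i + j = n → ∀ v ∈ W i, E (F v) - F (E v) = ((i : k) - j) • v

/-- The hard Lefschetz property of `E` on the graded module `W 0, …, W n`: the powers of `E`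
between degrees symmetric about `n / 2` are bijective. -/
structure IsHardLefschetz (W : ℕ → Submodule k V) (n : ℕ) (E : Module.End k V) : Prop
    extends IsRaising W n E where
  bijOn_pow : ∀ i m, 2 * i + m = n → Set.BijOn (E ^ m) (W i) (W (i + m))

/-- The degree `i` elements generating strings `u, E u, …, E ^ m u` of length at most `m + 1`; the
primitive elements of degree `i` in the sense of hard Lefschetz when `2 * i + m = n`. -/
def primitivePart (W : ℕ → Submodule k V) (E : Module.End k V) (i m : ℕ) : Submodule k V :=
  W i ⊓ LinearMap.ker (E ^ (m + 1))

variable {W : ℕ → Submodule k V} {n : ℕ} {E F : Module.End k V}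

lemma mem_primitivePart {i m : ℕ} {u : V} :
    u ∈ primitivePart W E i m ↔ u ∈ W i ∧ (E ^ (m + 1)) u = 0 :=
  Iff.rfl

lemma IsRaising.pow_apply_mem (h : IsRaising W n E) {i q : ℕ} (hq : i + q ≤ n) {v : V}
    (hv : v ∈ W i) : (E ^ q) v ∈ W (i + q) := by
  induction q with
  | zero => simpa using hv
  | succ q ih =>
    rw [pow_succ']
    exact h.raise (i + q) (by omega) _ (ih (by omega))

lemma IsRaising.apply_mem_succ (h : IsRaising W n E) (hW : ∀ i, n < i → W i = ⊥) {i : ℕ} {v : V}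
    (hv : v ∈ W i) : E v ∈ W (i + 1) := by
  rcases lt_trichotomy i n with hi | rfl | hi
  · exact h.raise i hi v hv
  · simp [h.raise_last v hv]
  · rw [hW i hi, Submodule.mem_bot] at hv
    simp [hv]

namespace IsSl2Pair

lemma reverse (h : IsSl2Pair W n E F) : IsSl2Pair (fun i ↦ W (n - i)) n F E where
  raise i hi v hv := by
    obtain ⟨j, rfl⟩ := Nat.exists_eq_add_of_lt hi
    rw [show i + j + 1 - i = j + 1 by omega] at hv
    rw [show i + j + 1 - (i + 1) = j by omega]
    exact h.lower j (by omega) v hv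
  raise_last v hv := h.lower_zero v (by simpa using hv)
  lower i hi v hv := by
    obtain ⟨j, rfl⟩ := Nat.exists_eq_add_of_lt hi
    rw [show i + j + 1 - (i + 1) = j by omega] at hv
    rw [show i + j + 1 - i = j + 1 by omega]
    exact h.raise j (by omega) v hv
  lower_zero v hv := h.raise_last v (by simpa using hv)
  comm i j hij v hv := by
    rw [show n - i = j by omega] at hv
    rw [← neg_sub, h.comm j i (by omega) v hv, ← neg_smul, neg_sub]

lemma lower_apply_mem (h : IsSl2Pair W n E F) (hW : ∀ i, n < i → W i = ⊥) {i : ℕ} {v : V}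
    (hv : v ∈ W (i + 1)) : F v ∈ W i := by
  rcases lt_or_ge i n with hi | hi
  · exact h.lower i hi v hv
  · rw [hW (i + 1) (by omega), Submodule.mem_bot] at hv
    simp [hv]

lemma raise_lower_apply (h : IsSl2Pair W n E F) (hW : ∀ i, n < i → W i = ⊥) {i : ℕ} {v : V}
    (hv : v ∈ W i) : E (F v) = F (E v) + (2 * i - n : k) • v := by
  rcases le_or_gt i n with hi | hi
  · obtain ⟨j, rfl⟩ := Nat.exists_eq_add_of_le hi
    rw [← sub_eq_iff_eq_add', h.comm i j rfl v hv]
    push_cast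
    module
  · rw [hW i hi, Submodule.mem_bot] at hv
    simp [hv]

lemma apply_pow_succ (h : IsSl2Pair W n E F) {i q r : ℕ} (hn : i + q + r = n) {v : V}
    (hv : v ∈ W i) :
    F ((E ^ (q + 1)) v) = (E ^ (q + 1)) (F v) + ((q + 1) * (r - i) : k) • (E ^ q) v := by
  induction q generalizing r with
  | zero =>
    have hcomm := h.comm i r (by omega) v hv
    rw [sub_eq_iff_eq_add] at hcomm
    simp only [zero_add, pow_one, pow_zero, Module.End.one_apply, Nat.cast_zero, hcomm]
    module
  | succ q ih =>
    have hcomm := h.comm (i + (q + 1)) r (by omega) _ (h.pow_apply_mem (by omega) hv)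
    rw [ih (r := r + 1) (by omega), map_add, map_smul] at hcomm
    simp only [← Module.End.mul_apply, ← pow_succ', ← mul_assoc] at hcomm ⊢
    rw [← sub_sub_cancel ((E ^ (q + 1 + 1) * F) v + _) ((F * E ^ (q + 1 + 1)) v), hcomm]
    push_cast
    module

section InvertibleScalars

variable [IsDomain k] [Module.IsTorsionFree k V]

lemma eq_zero_of_lower_eq_zero (h : IsSl2Pair W n E F) (hk : ∀ a < n, (a + 1 : k) ≠ 0)
    {i q s : ℕ} (hn : 2 * i + q + s = n) {v : V} (hv : v ∈ W i) (hF : F v = 0)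
    (hE : (E ^ q) v = 0) : v = 0 := by
  induction q generalizing s with
  | zero => simpa using hE
  | succ q ih =>
    refine ih (s := s + 1) (by omega) ?_
    have hcomm := h.apply_pow_succ (q := q) (r := i + (s + 1)) (by omega) hv
    rw [hE, hF, map_zero, map_zero, zero_add] at hcomm
    refine (smul_eq_zero.mp hcomm.symm).resolve_left (mul_ne_zero (hk q (by omega)) ?_)
    push_cast
    rw [add_sub_cancel_left]
    exact hk s (by omega)

lemma eq_zero_of_pow_apply_eq_zero (h : IsSl2Pair W n E F) (hk : ∀ a < n, (a + 1 : k) ≠ 0)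
    {i m : ℕ} (hn : 2 * i + m = n) {v : V} (hv : v ∈ W i) (hE : (E ^ m) v = 0) : v = 0 := by
  suffices hF : F v = 0 from h.eq_zero_of_lower_eq_zero hk (s := 0) hn hv hF hE
  induction i generalizing m v with
  | zero => exact h.lower_zero v hv
  | succ i ih =>
    have hE₁ : (E ^ (m + 1)) v = 0 := by rw [pow_succ', Module.End.mul_apply, hE, map_zero]
    have hE₂ : (E ^ (m + 2)) v = 0 := by rw [pow_succ', Module.End.mul_apply, hE₁, map_zero]
    have hFv : F v ∈ W i := h.lower i (by omega) v hv
    have hEF : (E ^ (m + 2)) (F v) = 0 := by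
      have hcomm := h.apply_pow_succ (q := m + 1) (r := i) (by omega) hv
      rwa [hE₁, hE₂, map_zero, smul_zero, add_zero, eq_comm] at hcomm
    exact h.eq_zero_of_lower_eq_zero hk (q := m + 2) (s := 0) (by omega) hFv
      (ih (by omega) hFv hEF) hEF

lemma injOn_pow (h : IsSl2Pair W n E F) (hk : ∀ a < n, (a + 1 : k) ≠ 0) {i m : ℕ}
    (hn : 2 * i + m = n) : Set.InjOn (E ^ m) (W i) := fun u hu v hv huv ↦
  sub_eq_zero.mp <| h.eq_zero_of_pow_apply_eq_zero hk hn (sub_mem hu hv) <| by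
    rw [map_sub, huv, sub_self]

end InvertibleScalars

end IsSl2Pair

namespace IsHardLefschetz

lemma injOn_pow (h : IsHardLefschetz W n E) {i j : ℕ} (hij : 2 * i + j ≤ n) :
    Set.InjOn (E ^ j) (W i) := by
  obtain ⟨r, rfl⟩ := Nat.exists_eq_add_of_le hij
  have hinj := (h.bijOn_pow i (r + j) (by omega)).injOn
  rw [pow_add, Module.End.coe_mul] at hinj
  exact hinj.of_comp

lemma surjOn_pow (h : IsHardLefschetz W n E) {i j : ℕ} (hij : n ≤ 2 * i + j) (hn : i + j ≤ n) :
    Set.SurjOn (E ^ j) (W i) (W (i + j)) := by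
  obtain ⟨q, rfl⟩ := Nat.exists_eq_add_of_le hn
  obtain ⟨r, rfl⟩ : ∃ r, i = q + r := Nat.exists_eq_add_of_le (by omega)
  intro w hw
  rw [show q + r + j = q + (j + r) by omega] at hw
  obtain ⟨v, hv, rfl⟩ := (h.bijOn_pow q (j + r) (by omega)).surjOn hw
  exact ⟨(E ^ r) v, h.pow_apply_mem (by omega) hv, by rw [pow_add, Module.End.mul_apply]⟩

lemma le_of_primitivePart_of_two_mul_le (h : IsHardLefschetz W n E) {d : ℕ} (hd : 2 * d ≤ n)
    {S : Submodule k V}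
    (hS : ∀ i q r, i + q = d → 2 * i + q + r = n →
      ∀ u ∈ primitivePart W E i (q + r), (E ^ q) u ∈ S) :
    W d ≤ S := by
  induction d generalizing S with
  | zero =>
    refine fun v hv ↦ hS 0 0 n rfl (by omega) v (mem_primitivePart.mpr ⟨hv, ?_⟩)
    have hlast := h.pow_apply_mem (q := n) (by omega) hv
    rw [zero_add] at hlast
    rw [zero_add, pow_succ', Module.End.mul_apply, h.raise_last _ hlast]
  | succ d ih =>
    obtain ⟨r, rfl⟩ := Nat.exists_eq_add_of_le hd
    intro v hv
    have hEv : (E ^ (r + 1)) v ∈ W (d + (r + 2)) := by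
      have := h.pow_apply_mem (q := r + 1) (by omega) hv
      rwa [show d + 1 + (r + 1) = d + (r + 2) by omega] at this
    obtain ⟨w, hw, hwv⟩ := (h.bijOn_pow d (r + 2) (by omega)).surjOn hEv
    have hEw : E w ∈ S := ih (S := S.comap E) (by omega) (fun i q r' hi hn u hu ↦ by
      obtain ⟨s, rfl⟩ : ∃ s, r' = s + 1 := Nat.exists_eq_add_of_le' (by omega)
      rw [Submodule.mem_comap, ← Module.End.mul_apply, ← pow_succ']
      exact hS i (q + 1) s (by omega) (by omega) u (by rwa [show q + 1 + s = q + (s + 1) by omega]))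
      hw
    have hprim : v - E w ∈ primitivePart W E (d + 1) (0 + r) := by
      refine mem_primitivePart.mpr ⟨sub_mem hv (h.raise d (by omega) w hw), ?_⟩
      rw [map_sub, ← Module.End.mul_apply, ← pow_succ, zero_add, hwv, sub_self]
    rw [← sub_add_cancel v (E w)]
    exact add_mem (hS (d + 1) 0 r rfl (by omega) _ hprim) hEw

lemma le_of_primitivePart (h : IsHardLefschetz W n E) {d : ℕ} (hd : d ≤ n) {S : Submodule k V}
    (hS : ∀ i q r, i + q = d → 2 * i + q + r = n →
      ∀ u ∈ primitivePart W E i (q + r), (E ^ q) u ∈ S) :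
    W d ≤ S := by
  rcases le_total (2 * d) n with hd₂ | hd₂
  · exact h.le_of_primitivePart_of_two_mul_le hd₂ hS
  · obtain ⟨i, rfl⟩ := Nat.exists_eq_add_of_le' hd
    obtain ⟨m, rfl⟩ : ∃ m, d = i + m := Nat.exists_eq_add_of_le (by omega)
    have hWi : W i ≤ S.comap (E ^ m) :=
      h.le_of_primitivePart_of_two_mul_le (by omega) fun a q r ha hn u hu ↦ by
        obtain rfl : r = m + q := by omega
        rw [Submodule.mem_comap, ← Module.End.mul_apply, ← pow_add]
        exact hS a (m + q) q (by omega) (by omega) u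
          (by rwa [show m + q + q = q + (m + q) by omega])
    intro w hw
    obtain ⟨v, hv, rfl⟩ := (h.bijOn_pow i m (by omega)).surjOn hw
    exact hWi hv

end IsHardLefschetz

/-- The components of the lowering operator `F` in the separate degrees, obtained from an operator
`D` inverting `E` along strings by solving `E F - F E = 2 d - n` for `F E` one degree at a time. -/
def loweringComponent (E D : Module.End k V) (n : ℕ) : ℕ → Module.End k V
  | 0 => 0
  | d + 1 => (E * loweringComponent E D n d + (n - 2 * d : k) • 1) * D

lemma loweringComponent_apply_of_apply_eq_zero {D : Module.End k V} (n d : ℕ) {u : V}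
    (hu : D u = 0) : loweringComponent E D n d u = 0 := by
  cases d with
  | zero => rfl
  | succ d => rw [loweringComponent, Module.End.mul_apply, hu, map_zero]

lemma loweringComponent_apply_pow_succ {D : Module.End k V} {i q r : ℕ}
    (hn : 2 * i + q + (r + 1) = n) {u : V} (hD₀ : D u = 0)
    (hD : ∀ p ≤ q, D ((E ^ (p + 1)) u) = (E ^ p) u) :
    loweringComponent E D n (i + q + 1) ((E ^ (q + 1)) u) =
      ((q + 1) * (r + 1) : k) • (E ^ q) u := by
  induction q generalizing r with
  | zero =>
    rw [loweringComponent, Module.End.mul_apply, hD 0 le_rfl, ← hn]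
    simp [loweringComponent_apply_of_apply_eq_zero _ _ hD₀]
  | succ q ih =>
    have hq := ih (r := r + 1) (by omega) fun p hp ↦ hD p (by omega)
    rw [loweringComponent, Module.End.mul_apply, hD (q + 1) le_rfl, LinearMap.add_apply,
      Module.End.mul_apply, ← add_assoc i, hq, map_smul, ← Module.End.mul_apply, ← pow_succ',
      LinearMap.smul_apply, Module.End.one_apply, ← add_smul, ← hn]
    congr 1
    push_cast
    ring

end DegreeOneOperators

section MaximalRank

variable {k V : Type*} [Field k] [AddCommGroup V] [Module k V]
  {W : ℕ → Submodule k V} {n : ℕ} {E F : Module.End k V}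

lemma injOn_iff_surjOn_of_finrank_eq {V' : Type*} [AddCommGroup V'] [Module k V']
    {P : Submodule k V} {Q : Submodule k V'} [FiniteDimensional k P] [FiniteDimensional k Q]
    {f : V →ₗ[k] V'} (hf : Set.MapsTo f P Q)
    (hPQ : Module.finrank k P = Module.finrank k Q) :
    Set.InjOn f P ↔ Set.SurjOn f P Q := by
  rw [← hf.restrict_inj, ← hf.restrict_surjective_iff]
  exact (f.restrict hf).injective_iff_surjective_of_finrank_eq_finrank hPQ

lemma finrank_map_of_injOn {V' : Type*} [AddCommGroup V'] [Module k V'] {P : Submodule k V}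
    {f : V →ₗ[k] V'} (hf : Set.InjOn f P) :
    Module.finrank k (P.map f) = Module.finrank k P := by
  rw [← LinearMap.range_domRestrict]
  exact LinearMap.finrank_range_of_inj (Set.injOn_iff_injective.mp hf)

namespace IsSl2Pair

variable [FiniteDimensional k V]

lemma finrank_le (h : IsSl2Pair W n E F) (hk : ∀ a < n, (a + 1 : k) ≠ 0) {i m : ℕ}
    (hn : 2 * i + m = n) : Module.finrank k (W i) ≤ Module.finrank k (W (i + m)) := by
  rw [← finrank_map_of_injOn (h.injOn_pow hk hn)]
  exact Submodule.finrank_mono <|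
    Submodule.map_le_iff_le_comap.mpr fun v hv ↦ h.pow_apply_mem (by omega) hv

theorem isHardLefschetz (h : IsSl2Pair W n E F) (hk : ∀ a < n, (a + 1 : k) ≠ 0) :
    IsHardLefschetz W n E where
  toIsRaising := h.toIsRaising
  bijOn_pow i m hn := by
    have hmaps : Set.MapsTo (E ^ m) (W i) (W (i + m)) := fun v hv ↦
      h.pow_apply_mem (by omega) hv
    have hge := h.reverse.finrank_le hk hn
    rw [show n - i = i + m by omega, show n - (i + m) = i by omega] at hge
    have hinj := h.injOn_pow hk hn
    exact ⟨hmaps, hinj,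
      (injOn_iff_surjOn_of_finrank_eq hmaps ((h.finrank_le hk hn).antisymm hge)).mp hinj⟩

end IsSl2Pair

namespace IsHardLefschetz

theorem finrank_map_pow [FiniteDimensional k V] (h : IsHardLefschetz W n E)
    (hW : ∀ i, n < i → W i = ⊥) (i j : ℕ) :
    Module.finrank k ((W i).map (E ^ j)) =
      min (Module.finrank k (W i)) (Module.finrank k (W (i + j))) := by
  have hle : (W i).map (E ^ j) ≤ W (i + j) := by
    rw [Submodule.map_le_iff_le_comap]
    induction j with
    | zero => exact le_rfl
    | succ j ih =>
      intro v hv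
      rw [Submodule.mem_comap, pow_succ']
      exact h.apply_mem_succ hW (ih hv)
  rcases le_total (2 * i + j) n with hij | hij
  · have hrank := finrank_map_of_injOn (h.injOn_pow hij)
    rw [hrank, min_eq_left (hrank ▸ Submodule.finrank_mono hle)]
  · have hge : W (i + j) ≤ (W i).map (E ^ j) := by
      rcases le_or_gt (i + j) n with hn | hn
      · exact h.surjOn_pow hij hn
      · simp [hW _ hn]
    rw [← hle.antisymm hge, min_eq_right (Submodule.finrank_map_le _ _)]

end IsHardLefschetz

end MaximalRank

section LoweringOperator

lemma exists_end_eqOn {ι k V : Type*} [DecidableEq ι] [CommRing k] [AddCommGroup V] [Module k V]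
    (W : ι → Submodule k V) [DirectSum.Decomposition W] (f : ι → Module.End k V) :
    ∃ F : Module.End k V, ∀ i, ∀ v ∈ W i, F v = f i v := by
  refine ⟨DirectSum.toModule k ι V (fun i ↦ (f i).domRestrict (W i)) ∘ₗ
    (DirectSum.decomposeLinearEquiv W).toLinearMap, fun i v hv ↦ ?_⟩
  lift v to W i using hv
  rw [LinearMap.comp_apply, LinearEquiv.coe_coe, DirectSum.decomposeLinearEquiv_apply,
    DirectSum.decompose_coe]
  exact DirectSum.toModule_lof k (φ := fun i ↦ (f i).domRestrict (W i)) i v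

variable {k V : Type*} [Field k] [AddCommGroup V] [Module k V]
  {W : ℕ → Submodule k V} {n : ℕ} {E : Module.End k V}

namespace IsHardLefschetz

lemma exists_leftInverse_pow (h : IsHardLefschetz W n E) {i m : ℕ} (hn : 2 * i + m = n) :
    ∃ g : Module.End k V, ∀ v ∈ W i, g ((E ^ m) v) = v := by
  have hinj : Function.Injective ((E ^ m).domRestrict (W i)) :=
    Set.injOn_iff_injective.mp (h.bijOn_pow i m hn).injOn
  obtain ⟨g, hg⟩ := LinearMap.exists_leftInverse_of_injective _ (LinearMap.ker_eq_bot.mpr hinj)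
  exact ⟨(W i).subtype ∘ₗ g, fun v hv ↦ congrArg Subtype.val (LinearMap.congr_fun hg ⟨v, hv⟩)⟩

lemma exists_stringShift_apply (h : IsHardLefschetz W n E) (d : ℕ) :
    ∃ D : Module.End k V, ∀ i m, 2 * i + m = n → ∀ u ∈ primitivePart W E i m,
      (i = d → D u = 0) ∧ ∀ q < m, i + (q + 1) = d → D ((E ^ (q + 1)) u) = (E ^ q) u := by
  rcases Nat.eq_zero_or_pos d with rfl | hd
  · exact ⟨0, fun i m _ u _ ↦ ⟨fun _ ↦ rfl, fun q _ hq ↦ by omega⟩⟩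
  rcases lt_or_ge n d with hnd | hdn
  · exact ⟨0, fun i m _ u _ ↦ ⟨fun _ ↦ rfl, fun q _ hq ↦ by omega⟩⟩
  -- Up to the middle degree, `D` is determined by `E ^ (r + 2) (D v) = E ^ (r + 1) v`; beyond it
  -- every `v` is some `E ^ (s + 1) w`, and `D v` is `E ^ s w`.
  rcases le_or_gt (2 * d) n with hlow | hhigh
  · obtain ⟨d, rfl⟩ := Nat.exists_eq_add_of_lt hd
    obtain ⟨r, rfl⟩ := Nat.exists_eq_add_of_le hlow
    obtain ⟨g, hg⟩ := h.exists_leftInverse_pow (i := d) (m := r + 2) (by omega)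
    refine ⟨g * E ^ (r + 1), fun i m hn u hu ↦ ⟨fun hi ↦ ?_, fun q _ hq ↦ ?_⟩⟩
    · obtain rfl : m = r := by omega
      rw [Module.End.mul_apply, (mem_primitivePart.mp hu).2, map_zero]
    · obtain rfl : d = i + q := by omega
      have hgq := hg _ (h.pow_apply_mem (q := q) (by omega) hu.1)
      rwa [← Module.End.mul_apply (E ^ (r + 2)), ← pow_add,
        show r + 2 + q = r + 1 + (q + 1) by omega, pow_add] at hgq
  · obtain ⟨j, rfl⟩ := Nat.exists_eq_add_of_le' hdn
    obtain ⟨s, rfl⟩ : ∃ s, d = j + s + 1 := Nat.exists_eq_add_of_lt (by omega)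
    obtain ⟨g, hg⟩ := h.exists_leftInverse_pow (i := j) (m := s + 1) (by omega)
    refine ⟨E ^ s * g, fun i m hn u hu ↦ ⟨fun hi ↦ by omega, fun q hqm hq ↦ ?_⟩⟩
    obtain ⟨p, rfl⟩ : ∃ p, j = i + p := Nat.exists_eq_add_of_le (by omega)
    obtain rfl : q = s + p := by omega
    rw [show s + p + 1 = s + 1 + p by omega, pow_add, Module.End.mul_apply, Module.End.mul_apply,
      hg _ (h.pow_apply_mem (by omega) hu.1), pow_add, Module.End.mul_apply]

lemma exists_stringShift [DirectSum.Decomposition W] (h : IsHardLefschetz W n E) :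
    ∃ D : Module.End k V, ∀ i m, 2 * i + m = n → ∀ u ∈ primitivePart W E i m,
      D u = 0 ∧ ∀ q < m, D ((E ^ (q + 1)) u) = (E ^ q) u := by
  choose f hf using h.exists_stringShift_apply
  obtain ⟨D, hD⟩ := exists_end_eqOn W f
  refine ⟨D, fun i m hn u hu ↦ ⟨?_, fun q hq ↦ ?_⟩⟩
  · rw [hD i u hu.1, (hf i i m hn u hu).1 rfl]
  · rw [hD _ _ (h.pow_apply_mem (by omega) hu.1), (hf _ i m hn u hu).2 q hq rfl]

lemma exists_lowering [DirectSum.Decomposition W] (h : IsHardLefschetz W n E) :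
    ∃ F : Module.End k V, ∀ i q r, 2 * i + q + r = n → ∀ u ∈ primitivePart W E i (q + r),
      F u = 0 ∧ F ((E ^ (q + 1)) u) = ((q + 1) * r : k) • (E ^ q) u := by
  obtain ⟨D, hD⟩ := h.exists_stringShift
  obtain ⟨F, hF⟩ := exists_end_eqOn W (loweringComponent E D n)
  refine ⟨F, fun i q r hn u hu ↦ ?_⟩
  obtain ⟨hD₀, hDq⟩ := hD i (q + r) (by omega) u hu
  refine ⟨by rw [hF i u hu.1, loweringComponent_apply_of_apply_eq_zero n i hD₀], ?_⟩
  cases r with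
  | zero => rw [(mem_primitivePart.mp hu).2, map_zero, Nat.cast_zero, mul_zero, zero_smul]
  | succ r =>
    rw [hF _ _ (h.pow_apply_mem (q := q + 1) (by omega) hu.1), ← add_assoc,
      loweringComponent_apply_pow_succ hn hD₀ fun p hp ↦ hDq p (by omega), Nat.cast_succ]

theorem exists_isSl2Pair [DirectSum.Decomposition W] (h : IsHardLefschetz W n E) :
    ∃ F : Module.End k V, IsSl2Pair W n E F := by
  obtain ⟨F, hF⟩ := h.exists_lowering
  refine ⟨F, h.toIsRaising, fun d hd ↦ ?_, ?_, fun a b hab ↦ ?_⟩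
  · refine h.le_of_primitivePart (S := (W d).comap F) hd fun i q r hi hn u hu ↦ ?_
    cases q with
    | zero => simp [(hF i 0 r hn u hu).1]
    | succ q =>
      obtain rfl : d = i + q := by omega
      rw [Submodule.mem_comap,
        (hF i q (r + 1) (by omega) u (by rwa [← add_assoc, add_right_comm])).2]
      exact Submodule.smul_mem _ _ (h.pow_apply_mem (by omega) hu.1)
  · refine h.le_of_primitivePart (S := LinearMap.ker F) (Nat.zero_le n) fun i q r hi hn u hu ↦ ?_
    obtain rfl : q = 0 := by omega
    exact (hF i 0 r hn u hu).1
  · suffices W a ≤ LinearMap.ker (E * F - F * E - (a - b : k) • 1) from fun v hv ↦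
      sub_eq_zero.mp (this hv)
    refine h.le_of_primitivePart (by omega) fun i q r hi hn u hu ↦ ?_
    obtain ⟨hF₀, hFq⟩ := hF i q r hn u hu
    obtain ⟨rfl, rfl⟩ : a = i + q ∧ b = i + r := by omega
    simp only [LinearMap.mem_ker, LinearMap.sub_apply, LinearMap.smul_apply, Module.End.mul_apply,
      Module.End.one_apply]
    rw [← Module.End.mul_apply E (E ^ q), ← pow_succ', hFq]
    cases q with
    | zero =>
      rw [pow_zero, Module.End.one_apply, hF₀, map_zero]
      push_cast
      module
    | succ q =>
      rw [(hF i q (r + 1) (by omega) u (by rwa [← add_assoc, add_right_comm])).2, map_smul,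
        ← Module.End.mul_apply, ← pow_succ']
      push_cast
      module

end IsHardLefschetz

end LoweringOperator

section StrongLefschetz

variable {k A B : Type*} [Field k] [CommRing A] [Algebra k A] [CommRing B] [Algebra k B]

theorem IsSL.isHardLefschetz {𝒜 : ℕ → Submodule k A} [SetLike.GradedMul 𝒜] [FiniteDimensional k A]
    {n : ℕ} (hbot : ∀ i, n < i → 𝒜 i = ⊥)
    (hsymm : ∀ i, i ≤ n → Module.finrank k (𝒜 i) = Module.finrank k (𝒜 (n - i)))
    {x : A} (hx : IsSL 𝒜 x) : IsHardLefschetz 𝒜 n (LinearMap.mulLeft k x) := by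
  have hraise : ∀ i, ∀ v ∈ 𝒜 i, LinearMap.mulLeft k x v ∈ 𝒜 (i + 1) := fun i v hv ↦
    add_comm 1 i ▸ SetLike.mul_mem_graded hx.1 hv
  have hE : IsRaising 𝒜 n (LinearMap.mulLeft k x) := ⟨fun i _ ↦ hraise i, fun v hv ↦ by
    simpa [hbot (n + 1) n.lt_succ_self] using hraise n v hv⟩
  refine ⟨hE, fun i m hn ↦ ?_⟩
  have hmaps : Set.MapsTo (LinearMap.mulLeft k x ^ m) (𝒜 i) (𝒜 (i + m)) := fun v hv ↦
    hE.pow_apply_mem (by omega) hv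
  have hrank : Module.finrank k (𝒜 i) = Module.finrank k (𝒜 (i + m)) := by
    rw [hsymm i (by omega), show n - i = i + m by omega]
  have hmap : (𝒜 i).map (LinearMap.mulLeft k x ^ m) = 𝒜 (i + m) := by
    refine Submodule.eq_of_le_of_finrank_eq (Submodule.map_le_iff_le_comap.mpr hmaps) ?_
    rw [LinearMap.pow_mulLeft, hx.2 i m, hrank, min_self]
  have hsurj : Set.SurjOn (LinearMap.mulLeft k x ^ m) (𝒜 i) (𝒜 (i + m)) := hmap.ge
  exact ⟨hmaps, (injOn_iff_surjOn_of_finrank_eq hmaps hrank).mpr hsurj, hsurj⟩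

end StrongLefschetz

section TensorProduct

variable {k A B : Type*} [Field k] [CommRing A] [Algebra k A] [CommRing B] [Algebra k B]
  {𝒜 : ℕ → Submodule k A} {ℬ : ℕ → Submodule k B} {m n : ℕ}

lemma tmul_mem_tensorGrading {i j d : ℕ} (hd : i + j = d) {a : A} {b : B} (ha : a ∈ 𝒜 i)
    (hb : b ∈ ℬ j) : a ⊗ₜ[k] b ∈ tensorGrading 𝒜 ℬ d :=
  Submodule.mem_iSup_of_mem (i, j) <| Submodule.mem_iSup_of_mem hd <|
    Submodule.apply_mem_map₂ (TensorProduct.mk k A B) ha hb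

lemma tensorGrading_le_iff {d : ℕ} {S : Submodule k (A ⊗[k] B)} :
    tensorGrading 𝒜 ℬ d ≤ S ↔
      ∀ i j, i + j = d → ∀ a ∈ 𝒜 i, ∀ b ∈ ℬ j, a ⊗ₜ[k] b ∈ S := by
  simp only [tensorGrading, iSup_le_iff, Submodule.map₂_le, Prod.forall, TensorProduct.mk_apply]

lemma tensorGrading_eq_bot (h𝒜 : ∀ i, m < i → 𝒜 i = ⊥) (hℬ : ∀ j, n < j → ℬ j = ⊥) {d : ℕ}
    (hd : m + n < d) : tensorGrading 𝒜 ℬ d = ⊥ := by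
  refine le_bot_iff.mp (tensorGrading_le_iff.mpr fun i j hij a ha b hb ↦ ?_)
  rcases lt_or_ge m i with hi | hi
  · rw [h𝒜 i hi, Submodule.mem_bot] at ha
    simp [ha]
  · rw [hℬ j (by omega), Submodule.mem_bot] at hb
    simp [hb]

lemma IsRaising.tensor {E : Module.End k A} {E' : Module.End k B}
    (hE : IsRaising 𝒜 m E) (hE' : IsRaising ℬ n E')
    (h𝒜 : ∀ i, m < i → 𝒜 i = ⊥) (hℬ : ∀ j, n < j → ℬ j = ⊥) :
    IsRaising (tensorGrading 𝒜 ℬ) (m + n) (E.rTensor B + E'.lTensor A) := by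
  have hraise : ∀ d, tensorGrading 𝒜 ℬ d ≤
      (tensorGrading 𝒜 ℬ (d + 1)).comap (E.rTensor B + E'.lTensor A) := fun d ↦
    tensorGrading_le_iff.mpr fun i j hij a ha b hb ↦
      add_mem (tmul_mem_tensorGrading (by omega) (hE.apply_mem_succ h𝒜 ha) hb)
        (tmul_mem_tensorGrading (by omega) ha (hE'.apply_mem_succ hℬ hb))
  refine ⟨fun d _ ↦ hraise d, fun v hv ↦ ?_⟩
  simpa [tensorGrading_eq_bot h𝒜 hℬ (Nat.lt_succ_self _)] using hraise _ hv

theorem IsSl2Pair.tensor {E F : Module.End k A} {E' F' : Module.End k B}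
    (h : IsSl2Pair 𝒜 m E F) (h' : IsSl2Pair ℬ n E' F')
    (h𝒜 : ∀ i, m < i → 𝒜 i = ⊥) (hℬ : ∀ j, n < j → ℬ j = ⊥) :
    IsSl2Pair (tensorGrading 𝒜 ℬ) (m + n) (E.rTensor B + E'.lTensor A)
      (F.rTensor B + F'.lTensor A) where
  toIsRaising := h.toIsRaising.tensor h'.toIsRaising h𝒜 hℬ
  lower d _ := by
    refine (tensorGrading_le_iff (S := (tensorGrading 𝒜 ℬ d).comap _)).mpr
      fun i j hij a ha b hb ↦ ?_
    rw [Submodule.mem_comap, LinearMap.add_apply, LinearMap.rTensor_tmul, LinearMap.lTensor_tmul]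
    refine add_mem ?_ ?_
    · cases i with
      | zero => simp [h.lower_zero a ha]
      | succ i => exact tmul_mem_tensorGrading (by omega) (h.lower_apply_mem h𝒜 ha) hb
    · cases j with
      | zero => simp [h'.lower_zero b hb]
      | succ j => exact tmul_mem_tensorGrading (by omega) ha (h'.lower_apply_mem hℬ hb)
  lower_zero := by
    refine (tensorGrading_le_iff (S := LinearMap.ker _)).mpr fun i j hij a ha b hb ↦ ?_
    obtain ⟨rfl, rfl⟩ : i = 0 ∧ j = 0 := by omega
    simp [h.lower_zero a ha, h'.lower_zero b hb]
  comm c d hcd := by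
    suffices tensorGrading 𝒜 ℬ c ≤ LinearMap.eqLocus
        ((E.rTensor B + E'.lTensor A) * (F.rTensor B + F'.lTensor A) -
          (F.rTensor B + F'.lTensor A) * (E.rTensor B + E'.lTensor A)) ((c - d : k) • 1) from this
    refine tensorGrading_le_iff.mpr fun i j hij a ha b hb ↦ ?_
    have hd : (d : k) = m + n - (i + j) := by
      rw [eq_sub_iff_add_eq']
      exact_mod_cast congrArg (Nat.cast (R := k)) (hij ▸ hcd)
    simp only [LinearMap.mem_eqLocus, LinearMap.sub_apply, Module.End.mul_apply,
      LinearMap.add_apply, LinearMap.rTensor_tmul, LinearMap.lTensor_tmul, map_add,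
      LinearMap.smul_apply, Module.End.one_apply, h.raise_lower_apply h𝒜 ha,
      h'.raise_lower_apply hℬ hb, TensorProduct.add_tmul, TensorProduct.tmul_add,
      TensorProduct.tmul_smul, ← TensorProduct.smul_tmul', ← hij, hd]
    push_cast
    module

end TensorProduct

lemma mulLeft_tmul_one_add_one_tmul {k A B : Type*} [CommRing k] [CommRing A] [Algebra k A]
    [CommRing B] [Algebra k B] (x : A) (y : B) :
    LinearMap.mulLeft k (x ⊗ₜ[k] (1 : B) + (1 : A) ⊗ₜ[k] y) =
      (LinearMap.mulLeft k x).rTensor B + (LinearMap.mulLeft k y).lTensor A := by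
  ext a b
  simp [add_mul]

lemma natCast_succ_ne_zero_of_lt {R : Type*} [NonAssocSemiring R] {n : ℕ}
    (h : ringChar R = 0 ∨ n < ringChar R) : ∀ a < n, (a + 1 : R) ≠ 0 := by
  intro a ha h0
  have hdvd : ringChar R ∣ a + 1 := ringChar.dvd (by exact_mod_cast h0)
  rcases h with h | h
  · rw [h, zero_dvd_iff] at hdvd
    omega
  · have := Nat.le_of_dvd a.succ_pos hdvd
    omega

theorem strongLefschetz_tensor_product_general
    {k A B : Type*} [Field k] [CommRing A] [Algebra k A] [CommRing B] [Algebra k B]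
    (𝒜 : ℕ → Submodule k A) [GradedAlgebra 𝒜] [FiniteDimensional k A]
    (ℬ : ℕ → Submodule k B) [GradedAlgebra ℬ] [FiniteDimensional k B]
    (jA jB : ℕ) (hjA' : ∀ i, jA < i → 𝒜 i = ⊥) (hjB' : ∀ i, jB < i → ℬ i = ⊥)
    (hsymmA : ∀ i, i ≤ jA →
      Module.finrank k (𝒜 i) = Module.finrank k (𝒜 (jA - i)))
    (hsymmB : ∀ i, i ≤ jB →
      Module.finrank k (ℬ i) = Module.finrank k (ℬ (jB - i)))
    (hchar : ringChar k = 0 ∨ jA + jB < ringChar k)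
    (x : A) (y : B) (hx : IsSL 𝒜 x) (hy : IsSL ℬ y) :
    IsSL (tensorGrading 𝒜 ℬ) ((x ⊗ₜ[k] (1 : B)) + ((1 : A) ⊗ₜ[k] y)) := by
  refine ⟨add_mem (tmul_mem_tensorGrading (add_zero 1) hx.1 (SetLike.one_mem_graded ℬ))
    (tmul_mem_tensorGrading (zero_add 1) (SetLike.one_mem_graded 𝒜) hy.1), fun i j ↦ ?_⟩
  obtain ⟨F, hF⟩ := (hx.isHardLefschetz hjA' hsymmA).exists_isSl2Pair
  obtain ⟨G, hG⟩ := (hy.isHardLefschetz hjB' hsymmB).exists_isSl2Pair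
  have hC := (hF.tensor hG hjA' hjB').isHardLefschetz (natCast_succ_ne_zero_of_lt hchar)
  rw [← LinearMap.pow_mulLeft, mulLeft_tmul_one_add_one_tmul]
  exact hC.finrank_map_pow (fun d hd ↦ tensorGrading_eq_bot hjA' hjB' hd) i j

/-- Let `A` and `B` be graded Artinian algebras over a field `k` with symmetric
Hilbert functions, and assume `char k = 0` or `char k > j_A + j_B`.  If
`x ∈ A_1` and `y ∈ B_1` are strong Lefschetz elements for `A` and `B`
respectively, then `ℓ = x ⊗ 1 + 1 ⊗ y ∈ C_1` is a strong Lefschetz element for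
the tensor product algebra `C = A ⊗_k B`. -/
theorem strongLefschetz_tensor_product
    {k A B : Type} [Field k] [CommRing A] [Algebra k A] [CommRing B] [Algebra k B]
    (𝒜 : ℕ → Submodule k A) [GradedAlgebra 𝒜] [FiniteDimensional k A]
    (hconnA : 𝒜 0 = Submodule.span k {(1 : A)})
    (ℬ : ℕ → Submodule k B) [GradedAlgebra ℬ] [FiniteDimensional k B]
    (hconnB : ℬ 0 = Submodule.span k {(1 : B)})
    (jA jB : ℕ) (hjA : 𝒜 jA ≠ ⊥) (hjA' : ∀ i, jA < i → 𝒜 i = ⊥)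
    (hjB : ℬ jB ≠ ⊥) (hjB' : ∀ i, jB < i → ℬ i = ⊥)
    (hsymmA : ∀ i, i ≤ jA →
      Module.finrank k (𝒜 i) = Module.finrank k (𝒜 (jA - i)))
    (hsymmB : ∀ i, i ≤ jB →
      Module.finrank k (ℬ i) = Module.finrank k (ℬ (jB - i)))
    (hchar : ringChar k = 0 ∨ jA + jB < ringChar k)
    (x : A) (y : B) (hx : IsSL 𝒜 x) (hy : IsSL ℬ y) :
    IsSL (tensorGrading 𝒜 ℬ) ((x ⊗ₜ[k] (1 : B)) + ((1 : A) ⊗ₜ[k] y)) := by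
  exact strongLefschetz_tensor_product_general 𝒜 ℬ jA jB hjA' hjB' hsymmA hsymmB hchar x y hx hy
end

section
/- Let A and B be graded Artinian algebras over a field k with symmetric Hilbert functions and socle degrees j_A = a and j_B = b, let C = A ⊗_k B, and assume char k = 0 or char k > a + b. If ℓ_C = ℓ_A ⊗ 1 + 1 ⊗ ℓ_B ∈ C_1 is a strong Lefschetz element for C, then ℓ_A ∈ A_1 is a strong Lefschetz element for A and ℓ_B ∈ B_1 is a strong Lefschetz element for B. -/
open TensorProduct

open Module Finset.HasAntidiagonal

section LinearAlgebra

lemma finrank_map_of_disjoint_ker {R M N : Type*} [Ring R] [AddCommGroup M] [Module R M]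
    [AddCommGroup N] [Module R N] {f : M →ₗ[R] N} {V : Submodule R M} (h : Disjoint V f.ker) :
    finrank R (V.map f) = finrank R V := by
  rw [← LinearMap.range_domRestrict]
  exact LinearMap.finrank_range_of_inj (LinearMap.injective_domRestrict_iff.2 h)

lemma finrank_sup_of_iSupIndep {k ι M : Type*} [DivisionRing k] [AddCommGroup M] [Module k M]
    {V : ι → Submodule k M} [∀ i, FiniteDimensional k (V i)] (hV : iSupIndep V) (s : Finset ι) :
    finrank k ↥(s.sup V) = ∑ i ∈ s, finrank k (V i) := by
  classical
  induction s using Finset.induction_on with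
  | empty => rw [Finset.sup_empty, finrank_bot, Finset.sum_empty]
  | insert i s hi ih =>
    have hdisj : Disjoint (V i) (s.sup V) := by
      rw [Finset.sup_eq_iSup]
      exact hV.disjoint_biSup (y := s) hi
    have hadd := Submodule.finrank_sup_add_finrank_inf_eq (V i) (s.sup V)
    rw [hdisj.eq_bot, finrank_bot, add_zero, ih] at hadd
    rw [Finset.sup_insert, hadd, Finset.sum_insert hi]

lemma iSupIndep_of_projections {R ι M : Type*} [Semiring R] [AddCommMonoid M] [Module R M]
    {V : ι → Submodule R M} (π : ι → M →ₗ[R] M) (hπ : ∀ i, V i ≤ (π i).eqLocus .id)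
    (hπ_ne : ∀ i j, j ≠ i → V j ≤ (π i).ker) : iSupIndep V := by
  refine fun i ↦ Submodule.disjoint_def.2 fun x hx hx' ↦ ?_
  have hker : ⨆ j, ⨆ (_ : j ≠ i), V j ≤ (π i).ker := iSup₂_le (hπ_ne i)
  calc x = π i x := (hπ i hx).symm
    _ = 0 := hker hx'

lemma exists_projections_of_iSupIndep {k ι M : Type*} [DivisionRing k] [AddCommGroup M]
    [Module k M] {V : ι → Submodule k M} (hV : iSupIndep V) :
    ∃ π : ι → M →ₗ[k] M,
      (∀ i, V i ≤ (π i).eqLocus .id) ∧ ∀ i j, j ≠ i → V j ≤ (π i).ker := by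
  choose W hVW hcompl using fun i ↦ (hV i).symm.exists_isCompl
  refine ⟨fun i ↦ (V i).projection (W i) (hcompl i).symm, fun i x hx ↦ ?_, fun i j hj ↦ ?_⟩
  · exact Submodule.projection_apply_of_mem_left _ hx
  · rw [Submodule.ker_projection]
    exact (le_iSup₂_of_le j hj le_rfl).trans (hVW i)

variable {k A B : Type*} [Field k] [AddCommGroup A] [Module k A] [AddCommGroup B] [Module k B]

lemma finrank_map₂_mk (V : Submodule k A) (W : Submodule k B) :
    finrank k (Submodule.map₂ (TensorProduct.mk k A B) V W) = finrank k V * finrank k W := by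
  rw [← TensorProduct.range_mapIncl,
    LinearMap.finrank_range_of_inj (Module.Flat.tensorProduct_mapIncl_injective_of_right V W),
    finrank_tensorProduct]

lemma iSupIndep_map₂_mk {ι κ : Type*} {V : ι → Submodule k A} {W : κ → Submodule k B}
    (hV : iSupIndep V) (hW : iSupIndep W) :
    iSupIndep fun p : ι × κ ↦ Submodule.map₂ (TensorProduct.mk k A B) (V p.1) (W p.2) := by
  obtain ⟨π, hπ, hπ_ne⟩ := exists_projections_of_iSupIndep hV
  obtain ⟨ρ, hρ, hρ_ne⟩ := exists_projections_of_iSupIndep hW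
  refine iSupIndep_of_projections (fun p ↦ TensorProduct.map (π p.1) (ρ p.2))
    (fun p ↦ Submodule.map₂_le.2 fun x hx y hy ↦ ?_)
    (fun p q hqp ↦ Submodule.map₂_le.2 fun x hx y hy ↦ ?_)
  · exact congrArg₂ (· ⊗ₜ[k] ·) (hπ p.1 hx) (hρ p.2 hy)
  · rw [LinearMap.mem_ker, TensorProduct.mk_apply, TensorProduct.map_tmul]
    rcases not_and_or.1 (mt Prod.ext_iff.2 hqp) with h | h
    · rw [LinearMap.mem_ker.1 (hπ_ne p.1 q.1 h hx), TensorProduct.zero_tmul]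
    · rw [LinearMap.mem_ker.1 (hρ_ne p.2 q.2 h hy), TensorProduct.tmul_zero]

end LinearAlgebra

lemma sum_antidiagonal_mul_eq_of_symm {R : Type*} [NonUnitalNonAssocSemiring R] {f g : ℕ → R}
    {a b : ℕ} (hf : ∀ i, a < i → f i = 0) (hg : ∀ j, b < j → g j = 0)
    (hf_symm : ∀ i ≤ a, f i = f (a - i)) (hg_symm : ∀ j ≤ b, g j = g (b - j))
    {d : ℕ} (hd : d ≤ a + b) :
    ∑ p ∈ antidiagonal d, f p.1 * g p.2 = ∑ p ∈ antidiagonal (a + b - d), f p.1 * g p.2 := by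
  have hle {p : ℕ × ℕ} (hp : f p.1 * g p.2 ≠ 0) : p.1 ≤ a ∧ p.2 ≤ b :=
    ⟨not_lt.1 fun h ↦ hp (by rw [hf _ h, zero_mul]), not_lt.1 fun h ↦ hp (by rw [hg _ h, mul_zero])⟩
  refine Finset.sum_bij_ne_zero (fun p _ _ ↦ (a - p.1, b - p.2)) ?_ ?_ ?_ ?_
  · intro p hp hp0
    have := hle hp0
    rw [mem_antidiagonal] at hp ⊢
    omega
  · intro p _ hp0 q _ hq0 hpq
    have := hle hp0
    have := hle hq0
    rw [Prod.mk.injEq] at hpq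
    ext <;> omega
  · intro q hq hq0
    obtain ⟨hqa, hqb⟩ := hle hq0
    rw [mem_antidiagonal] at hq
    refine ⟨(a - q.1, b - q.2), mem_antidiagonal.2 (by omega), ?_, ?_⟩
    · rwa [← hf_symm _ hqa, ← hg_symm _ hqb]
    · ext <;> dsimp only <;> omega
  · intro p _ hp0
    rw [hf_symm _ (hle hp0).1, hg_symm _ (hle hp0).2]

section StrongLefschetz

variable {k A B : Type*} [Field k] [CommRing A] [Algebra k A] [CommRing B] [Algebra k B]
  {𝒜 : ℕ → Submodule k A} {ℬ : ℕ → Submodule k B} {a b : ℕ}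

/-- The Hilbert function `i ↦ dim 𝒜 i` vanishes above degree `a` and is symmetric about `a / 2`.
For `A ≠ 0` graded, `a` is then the socle degree. -/
structure HasSymmetricHilbertFunction (𝒜 : ℕ → Submodule k A) (a : ℕ) : Prop where
  eq_bot_of_lt : ∀ i, a < i → 𝒜 i = ⊥
  finrank_eq : ∀ i ≤ a, finrank k (𝒜 i) = finrank k (𝒜 (a - i))

/-- The strong Lefschetz property in the narrow sense, for an algebra with Hilbert function
symmetric about `a / 2`: multiplication by `ℓ ^ (a - 2i)` is injective from `𝒜 i` to the
complementary degree `a - i`, whenever `i ≤ a / 2`. -/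
def IsNarrowSL (𝒜 : ℕ → Submodule k A) (a : ℕ) (ℓ : A) : Prop :=
  ∀ i, 2 * i ≤ a → ∀ x ∈ 𝒜 i, ℓ ^ (a - 2 * i) * x = 0 → x = 0

section MaximalRank

variable {ℓ : A}

lemma IsSL.isNarrowSL [FiniteDimensional k A] (hℓ : IsSL 𝒜 ℓ)
    (hA : HasSymmetricHilbertFunction 𝒜 a) : IsNarrowSL 𝒜 a ℓ := by
  intro i hi
  refine LinearMap.disjoint_ker.1 (Submodule.disjoint_ker_of_finrank_le
    (LinearMap.mulLeft k (ℓ ^ (a - 2 * i))) ?_)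
  rw [hℓ.2, hA.finrank_eq i (by omega), show i + (a - 2 * i) = a - i by omega, min_self]

lemma IsNarrowSL.finrank_map_mulLeft_pow (h : IsNarrowSL 𝒜 a ℓ) {i j : ℕ} (hij : 2 * i + j ≤ a) :
    finrank k ((𝒜 i).map (LinearMap.mulLeft k (ℓ ^ j))) = finrank k (𝒜 i) := by
  refine finrank_map_of_disjoint_ker (LinearMap.disjoint_ker.2 fun x hx hx0 ↦ ?_)
  rw [LinearMap.mulLeft_apply] at hx0
  refine h i (by omega) x hx ?_
  rw [show a - 2 * i = (a - 2 * i - j) + j by omega, pow_add, mul_assoc, hx0, mul_zero]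

variable [SetLike.GradedMonoid 𝒜]

lemma map_mulLeft_pow_le (hℓ : ℓ ∈ 𝒜 1) (i j : ℕ) :
    (𝒜 i).map (LinearMap.mulLeft k (ℓ ^ j)) ≤ 𝒜 (i + j) := by
  rintro _ ⟨x, hx, rfl⟩
  simpa [add_comm] using SetLike.mul_mem_graded (SetLike.pow_mem_graded j hℓ) hx

lemma HasSymmetricHilbertFunction.pow_succ_eq_zero (hA : HasSymmetricHilbertFunction 𝒜 a)
    (hℓ : ℓ ∈ 𝒜 1) : ℓ ^ (a + 1) = 0 := by
  simpa [hA.eq_bot_of_lt (a + 1) a.lt_succ_self] using SetLike.pow_mem_graded (a + 1) hℓ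

variable [FiniteDimensional k A]

lemma IsNarrowSL.map_mulLeft_pow_sub (h : IsNarrowSL 𝒜 a ℓ)
    (hA : HasSymmetricHilbertFunction 𝒜 a) (hℓ : ℓ ∈ 𝒜 1) {i : ℕ} (hi : 2 * i ≤ a) :
    (𝒜 i).map (LinearMap.mulLeft k (ℓ ^ (a - 2 * i))) = 𝒜 (a - i) := by
  have hle := map_mulLeft_pow_le hℓ i (a - 2 * i)
  rw [show i + (a - 2 * i) = a - i by omega] at hle
  refine Submodule.eq_of_le_of_finrank_eq hle ?_
  rw [h.finrank_map_mulLeft_pow (by omega), hA.finrank_eq i (by omega)]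

lemma IsNarrowSL.map_mulLeft_pow (h : IsNarrowSL 𝒜 a ℓ) (hA : HasSymmetricHilbertFunction 𝒜 a)
    (hℓ : ℓ ∈ 𝒜 1) {i j : ℕ} (hij : i + j ≤ a) (hij' : a ≤ 2 * i + j) :
    (𝒜 i).map (LinearMap.mulLeft k (ℓ ^ j)) = 𝒜 (i + j) := by
  -- The bijection onto `𝒜 (i + j)` from the complementary degree `m` factors through `𝒜 i`.
  obtain ⟨m, rfl⟩ := Nat.exists_eq_add_of_le hij
  obtain ⟨n, rfl⟩ := Nat.exists_eq_add_of_le (show m ≤ i by omega)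
  refine (map_mulLeft_pow_le hℓ _ j).antisymm ?_
  calc 𝒜 (m + n + j)
      = (𝒜 m).map (LinearMap.mulLeft k (ℓ ^ (j + n))) := by
        have hsurj := h.map_mulLeft_pow_sub hA hℓ (i := m) (by omega)
        rw [show m + n + j + m - 2 * m = j + n by omega, Nat.add_sub_cancel] at hsurj
        exact hsurj.symm
    _ = ((𝒜 m).map (LinearMap.mulLeft k (ℓ ^ n))).map (LinearMap.mulLeft k (ℓ ^ j)) := by
        rw [pow_add, LinearMap.mulLeft_mul, Submodule.map_comp]
    _ ≤ (𝒜 (m + n)).map (LinearMap.mulLeft k (ℓ ^ j)) :=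
        Submodule.map_mono (map_mulLeft_pow_le hℓ m n)

lemma IsNarrowSL.isSL (h : IsNarrowSL 𝒜 a ℓ) (hA : HasSymmetricHilbertFunction 𝒜 a)
    (hℓ : ℓ ∈ 𝒜 1) : IsSL 𝒜 ℓ := by
  refine ⟨hℓ, fun i j ↦ ?_⟩
  have hle_target := Submodule.finrank_mono (map_mulLeft_pow_le hℓ i j)
  have hle_source := Submodule.finrank_map_le (LinearMap.mulLeft k (ℓ ^ j)) (𝒜 i)
  rcases lt_or_ge a (i + j) with hlt | hij
  · rw [hA.eq_bot_of_lt _ hlt, finrank_bot] at hle_target ⊢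
    omega
  rcases le_total (2 * i + j) a with hlow | hhigh
  · rw [h.finrank_map_mulLeft_pow hlow] at hle_target ⊢
    exact (min_eq_left hle_target).symm
  · rw [h.map_mulLeft_pow hA hℓ hij hhigh] at hle_source ⊢
    exact (min_eq_right hle_source).symm

end MaximalRank

lemma IsNarrowSL.of_algHom {𝒞 : ℕ → Submodule k B} {ℓ : A} {v : B} (φ : A →ₐ[k] B)
    (hφ : Function.Injective φ) (hφ_mem : ∀ i, ∀ x ∈ 𝒜 i, φ x ∈ 𝒞 i) (hv : v ^ (b + 1) = 0)
    (h : IsNarrowSL 𝒞 (a + b) (φ ℓ + v)) : IsNarrowSL 𝒜 a ℓ := by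
  intro i hi x hx hx0
  have hℓ_ann : φ ℓ ^ (a - 2 * i) ∈ Ideal.torsionOf B B (φ x) := by
    rw [Ideal.mem_torsionOf_iff, smul_eq_mul, ← map_pow, ← map_mul, hx0, map_zero]
  have hv_ann : v ^ (b + 1) ∈ Ideal.torsionOf B B (φ x) := hv ▸ zero_mem _
  have hφx : φ x = 0 := h i (by omega) (φ x) (hφ_mem i x hx)
    (Ideal.add_pow_mem_of_pow_mem_of_le _ hℓ_ann hv_ann (by omega))
  exact (map_eq_zero_iff φ hφ).1 hφx

section TensorGrading

lemma tmul_mem_tensorGrading_s11 {i j : ℕ} {x : A} (hx : x ∈ 𝒜 i) {y : B} (hy : y ∈ ℬ j) :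
    x ⊗ₜ[k] y ∈ tensorGrading 𝒜 ℬ (i + j) :=
  Submodule.mem_iSup_of_mem (i, j) (Submodule.mem_iSup_of_mem rfl
    (Submodule.apply_mem_map₂ (TensorProduct.mk k A B) hx hy))

variable [FiniteDimensional k A] [FiniteDimensional k B]

lemma finrank_tensorGrading (h𝒜 : iSupIndep 𝒜) (hℬ : iSupIndep ℬ) (d : ℕ) :
    finrank k (tensorGrading 𝒜 ℬ d) =
      ∑ p ∈ antidiagonal d, finrank k (𝒜 p.1) * finrank k (ℬ p.2) := by
  have hsup : tensorGrading 𝒜 ℬ d = (antidiagonal d).sup fun p ↦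
      Submodule.map₂ (TensorProduct.mk k A B) (𝒜 p.1) (ℬ p.2) := by
    simp only [tensorGrading, Finset.sup_eq_iSup, mem_antidiagonal]
  rw [hsup, finrank_sup_of_iSupIndep (iSupIndep_map₂_mk h𝒜 hℬ)]
  simp only [finrank_map₂_mk]

lemma HasSymmetricHilbertFunction.tensorGrading (h𝒜 : iSupIndep 𝒜) (hℬ : iSupIndep ℬ)
    (hA : HasSymmetricHilbertFunction 𝒜 a) (hB : HasSymmetricHilbertFunction ℬ b) :
    HasSymmetricHilbertFunction (tensorGrading 𝒜 ℬ) (a + b) where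
  eq_bot_of_lt d hd := by
    refine eq_bot_iff.2 (iSup₂_le fun p hp ↦ le_bot_iff.2 ?_)
    rcases (by omega : a < p.1 ∨ b < p.2) with h | h
    · rw [hA.eq_bot_of_lt _ h, Submodule.map₂_bot_left]
    · rw [hB.eq_bot_of_lt _ h, Submodule.map₂_bot_right]
  finrank_eq d hd := by
    rw [finrank_tensorGrading h𝒜 hℬ, finrank_tensorGrading h𝒜 hℬ]
    refine sum_antidiagonal_mul_eq_of_symm (f := fun i ↦ finrank k (𝒜 i))
      (g := fun j ↦ finrank k (ℬ j)) ?_ ?_ hA.finrank_eq hB.finrank_eq hd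
    · exact fun i hi ↦ by rw [hA.eq_bot_of_lt i hi, finrank_bot]
    · exact fun j hj ↦ by rw [hB.eq_bot_of_lt j hj, finrank_bot]

end TensorGrading

theorem strongLefschetz_of_tensor_product_general
    [GradedAlgebra 𝒜] [FiniteDimensional k A] [GradedAlgebra ℬ] [FiniteDimensional k B]
    (ha : 𝒜 a ≠ ⊥) (hb : ℬ b ≠ ⊥)
    (hA : HasSymmetricHilbertFunction 𝒜 a) (hB : HasSymmetricHilbertFunction ℬ b)
    {ℓA : A} (hℓA : ℓA ∈ 𝒜 1) {ℓB : B} (hℓB : ℓB ∈ ℬ 1)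
    (hC : IsSL (tensorGrading 𝒜 ℬ) (ℓA ⊗ₜ[k] (1 : B) + (1 : A) ⊗ₜ[k] ℓB)) :
    IsSL 𝒜 ℓA ∧ IsSL ℬ ℓB := by
  have : Nontrivial A := not_subsingleton_iff_nontrivial.1 fun _ ↦ ha (Subsingleton.elim _ _)
  have : Nontrivial B := not_subsingleton_iff_nontrivial.1 fun _ ↦ hb (Subsingleton.elim _ _)
  have hC' := hC.isNarrowSL (.tensorGrading
    (DirectSum.Decomposition.isInternal 𝒜).submodule_iSupIndep
    (DirectSum.Decomposition.isInternal ℬ).submodule_iSupIndep hA hB)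
  constructor
  · refine IsNarrowSL.isSL (.of_algHom (Algebra.TensorProduct.includeLeft : A →ₐ[k] A ⊗[k] B)
      (Algebra.TensorProduct.includeLeft_injective (algebraMap k B).injective)
      (fun i x hx ↦ tmul_mem_tensorGrading_s11 hx SetLike.GradedOne.one_mem) ?_ hC') hA hℓA
    rw [Algebra.TensorProduct.tmul_pow, hB.pow_succ_eq_zero hℓB, TensorProduct.tmul_zero]
  · rw [add_comm a, add_comm (ℓA ⊗ₜ[k] 1)] at hC'
    refine IsNarrowSL.isSL (.of_algHom (Algebra.TensorProduct.includeRight : B →ₐ[k] A ⊗[k] B)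
      (Algebra.TensorProduct.includeRight_injective (algebraMap k A).injective)
      (fun j y hy ↦ ?_) ?_ hC') hB hℓB
    · exact zero_add j ▸ tmul_mem_tensorGrading_s11 SetLike.GradedOne.one_mem hy
    · rw [Algebra.TensorProduct.tmul_pow, hA.pow_succ_eq_zero hℓA, TensorProduct.zero_tmul]

end StrongLefschetz

/-- Let `A` and `B` be graded Artinian algebras over a field `k` with symmetric
Hilbert functions and socle degrees `j_A = a`, `j_B = b`, let `C = A ⊗_k B`, and
assume `char k = 0` or `char k > a + b`.  If `ℓ_C = ℓ_A ⊗ 1 + 1 ⊗ ℓ_B ∈ C_1` is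
a strong Lefschetz element for `C`, then `ℓ_A ∈ A_1` is strong Lefschetz for `A`
and `ℓ_B ∈ B_1` is strong Lefschetz for `B`. -/
theorem strongLefschetz_of_tensor_product
    {k A B : Type} [Field k] [CommRing A] [Algebra k A] [CommRing B] [Algebra k B]
    (𝒜 : ℕ → Submodule k A) [GradedAlgebra 𝒜] [FiniteDimensional k A]
    (hconnA : 𝒜 0 = Submodule.span k {(1 : A)})
    (ℬ : ℕ → Submodule k B) [GradedAlgebra ℬ] [FiniteDimensional k B]
    (hconnB : ℬ 0 = Submodule.span k {(1 : B)})
    (jA jB : ℕ) (hjA : 𝒜 jA ≠ ⊥) (hjA' : ∀ i, jA < i → 𝒜 i = ⊥)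
    (hjB : ℬ jB ≠ ⊥) (hjB' : ∀ i, jB < i → ℬ i = ⊥)
    (hsymmA : ∀ i, i ≤ jA →
      Module.finrank k (𝒜 i) = Module.finrank k (𝒜 (jA - i)))
    (hsymmB : ∀ i, i ≤ jB →
      Module.finrank k (ℬ i) = Module.finrank k (ℬ (jB - i)))
    (hchar : ringChar k = 0 ∨ jA + jB < ringChar k)
    (ℓA : A) (hℓA : ℓA ∈ 𝒜 1) (ℓB : B) (hℓB : ℓB ∈ ℬ 1)
    (hC : IsSL (tensorGrading 𝒜 ℬ) ((ℓA ⊗ₜ[k] (1 : B)) + ((1 : A) ⊗ₜ[k] ℓB))) :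
    IsSL 𝒜 ℓA ∧ IsSL ℬ ℓB :=
  strongLefschetz_of_tensor_product_general hjA hjB ⟨hjA', hsymmA⟩ ⟨hjB', hsymmB⟩ hℓA hℓB hC
end

section
/- Let A, B, C be graded Artinian algebras over a field k with degree-preserving algebra homomorphisms ι : A → C and π : C → B, where π is surjective and ker(π) = ι(m_A)·C (the ideal of C generated by the image of the maximal graded ideal of A). Then C is a free A-module via ι if and only if dim_k C = dim_k A · dim_k B; in this case C is a free extension with base A and fiber B. -/
/-!
Let `I` be an ideal in the Jacobson radical of `A`, and `M` a finite `A`-module. By Nakayama's lemma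
a `k`-linear complement `W` of `I M` generates `M`, so `A ⊗[k] W → M` is surjective, and it is an
isomorphism as soon as `dim M = dim A · dim W`, where `dim W = dim (M ⧸ I M)`. Conversely, if `M` is
free of rank `n` then `M ⧸ I M` is free of rank `n` over `A ⧸ I`, hence of dimension `n` over `k`
when `A ⧸ I = k`. The ideal `m_A` is such an ideal `I`: only finitely many `A_i` are nonzero, so
homogeneous elements of positive degree are nilpotent.
-/

/-- The maximal graded ideal `m_A = ⊕_{i ≥ 1} A_i` of a graded algebra, as a
set of elements. -/
def gradedMaxSet {k A : Type*} [Field k] [CommRing A] [Algebra k A]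
    (𝒜 : ℕ → Submodule k A) : Set A :=
  (⨆ i : ℕ, 𝒜 (i + 1) : Submodule k A)

open Module Submodule TensorProduct

section QuotientDimension

variable {A M : Type*} [CommRing A] [AddCommGroup M] [Module A M]

theorem span_eq_top_of_codisjoint_smul_top {R : Type*} [CommSemiring R] [Algebra R A] [Module R M]
    [IsScalarTower R A M] [Module.Finite A M] {I : Ideal A}
    (hI : I ≤ Ideal.jacobson ⊥) {W : Submodule R M}
    (hW : Codisjoint W ((I • ⊤ : Submodule A M).restrictScalars R)) :
    span A (W : Set M) = ⊤ := by
  refine top_le_iff.1 (le_of_le_smul_of_le_jacobson_bot Module.Finite.fg_top hI fun x _ => ?_)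
  obtain ⟨w, y, hw, hy, rfl⟩ := codisjoint_iff_exists_add_eq.1 hW x
  exact add_mem_sup (subset_span hw) hy

variable {k : Type*} [Field k] [Algebra k A] [Module k M] [IsScalarTower k A M]

theorem free_of_surjective_of_finrank_eq {N : Type*} [AddCommGroup N] [Module k N] [Module A N]
    [IsScalarTower k A N] [FiniteDimensional k N] [FiniteDimensional k M] [Module.Free A N]
    {f : N →ₗ[A] M} (hf : Function.Surjective f) (h : finrank k N = finrank k M) :
    Module.Free A M :=
  have hinj : Function.Injective (f.restrictScalars k) :=
    (LinearMap.injective_iff_surjective_of_finrank_eq_finrank h).2 hf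
  .of_equiv (LinearEquiv.ofBijective f ⟨hinj, hf⟩)

theorem free_of_finrank_eq_mul_finrank_quotient [FiniteDimensional k A] [Module.Finite A M]
    {I : Ideal A} (hI : I ≤ Ideal.jacobson ⊥)
    (hdim : finrank k M = finrank k A * finrank k (M ⧸ (I • ⊤ : Submodule A M))) :
    Module.Free A M := by
  have : FiniteDimensional k M := Module.Finite.trans A M
  obtain ⟨W, hW⟩ := Submodule.exists_isCompl ((I • ⊤ : Submodule A M).restrictScalars k)
  have hsurj : Function.Surjective (W.subtype.liftBaseChange A) := by
    rw [← LinearMap.range_eq_top, LinearMap.range_liftBaseChange, range_subtype,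
      span_eq_top_of_codisjoint_smul_top hI hW.symm.codisjoint]
  have hfinrank : finrank k (M ⧸ (I • ⊤ : Submodule A M)) = finrank k W :=
    (quotientEquivOfIsCompl _ W hW).finrank_eq
  exact free_of_surjective_of_finrank_eq (k := k) hsurj
    (by rw [finrank_tensorProduct, hdim, hfinrank])

theorem finrank_quotient_smul_top [Module.Free A M] (I : Ideal A) :
    finrank k (M ⧸ (I • ⊤ : Submodule A M)) = finrank k (A ⧸ I) * finrank A M := by
  rw [← ((quotTensorEquivQuotSMul M I).restrictScalars k).finrank_eq]
  rcases subsingleton_or_nontrivial (A ⧸ I) with _ | _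
  · have : Subsingleton ((A ⧸ I) ⊗[A] M) := Module.subsingleton (A ⧸ I) _
    simp only [finrank_zero_of_subsingleton, zero_mul]
  · have : Nontrivial A := (Ideal.Quotient.mk I).domain_nontrivial
    rw [← finrank_mul_finrank k (A ⧸ I), finrank_baseChange]

theorem finrank_eq_one_of_surjective_algebraMap [Nontrivial A]
    (h : Function.Surjective (algebraMap k A)) : finrank k A = 1 :=
  Subalgebra.bot_eq_top_iff_finrank_eq_one.1 (Algebra.surjective_algebraMap_iff.1 h).symm

theorem free_iff_finrank_eq_mul_finrank_quotient [FiniteDimensional k A] [Module.Finite A M]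
    {I : Ideal A} (hI : I ≤ Ideal.jacobson ⊥)
    (hres : Function.Surjective (algebraMap k (A ⧸ I))) :
    Module.Free A M ↔
      finrank k M = finrank k A * finrank k (M ⧸ (I • ⊤ : Submodule A M)) := by
  refine ⟨fun _ => ?_, free_of_finrank_eq_mul_finrank_quotient hI⟩
  rcases subsingleton_or_nontrivial A with _ | _
  · have : Subsingleton M := Module.subsingleton A M
    simp only [finrank_zero_of_subsingleton, zero_mul]
  · have hne : I ≠ ⊤ := fun h =>
      bot_ne_top (Ideal.jacobson_eq_top_iff.1 (top_le_iff.1 (h ▸ hI)))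
    have : Nontrivial (A ⧸ I) := Ideal.Quotient.nontrivial_iff.2 hne
    rw [finrank_quotient_smul_top, finrank_eq_one_of_surjective_algebraMap hres, one_mul,
      finrank_mul_finrank]

end QuotientDimension

section Irrelevant

variable {R A : Type*} [CommRing R] [CommRing A] [Algebra R A]
  (𝒜 : ℕ → Submodule R A) [GradedAlgebra 𝒜]

theorem irrelevant_le_nilradical [IsNoetherian R A] :
    (HomogeneousIdeal.irrelevant 𝒜).toIdeal ≤ nilradical A := by
  refine (HomogeneousIdeal.toIdeal_irrelevant_le 𝒜).2 fun i hi x hx => ?_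
  have hfin : {j | 𝒜 j ≠ ⊥}.Finite :=
    WellFoundedGT.finite_ne_bot_of_iSupIndep
      (DirectSum.Decomposition.isInternal 𝒜).submodule_iSupIndep
  obtain ⟨n, hn⟩ := (hfin.preimage (mul_left_injective₀ hi.ne').injOn).exists_notMem
  have hbot : 𝒜 (n * i) = ⊥ := not_not.1 hn
  have hpow : x ^ n ∈ 𝒜 (n * i) := SetLike.pow_mem_graded (A := 𝒜) n hx
  exact mem_nilradical.2 ⟨n, (mem_bot R).1 (hbot ▸ hpow)⟩

theorem surjective_algebraMap_quotient_irrelevant (h : 𝒜 0 ≤ span R {1}) :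
    Function.Surjective
      (algebraMap R (A ⧸ (HomogeneousIdeal.irrelevant 𝒜).toIdeal)) := by
  intro x
  obtain ⟨a, rfl⟩ := Ideal.Quotient.mk_surjective x
  obtain ⟨c, hc⟩ := mem_span_singleton.1 (h (DirectSum.decompose 𝒜 a 0).2)
  have hmem : a - algebraMap R A c ∈ (HomogeneousIdeal.irrelevant 𝒜).toIdeal := by
    rw [HomogeneousIdeal.toIdeal_irrelevant, RingHom.mem_ker, map_sub, sub_eq_zero,
      GradedRing.projZeroRingHom_apply, Algebra.algebraMap_eq_smul_one, hc,
      GradedRing.projZeroRingHom_apply, DirectSum.decompose_coe, DirectSum.of_eq_same]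
  exact ⟨c, (Ideal.Quotient.eq.2 hmem).symm⟩

end Irrelevant

theorem gradedMaxSet_eq_irrelevant {k A : Type*} [Field k] [CommRing A] [Algebra k A]
    (𝒜 : ℕ → Submodule k A) [GradedAlgebra 𝒜] :
    gradedMaxSet 𝒜 = (HomogeneousIdeal.irrelevant 𝒜).toIdeal := by
  have hle : (⨆ i : ℕ, 𝒜 (i + 1)) ≤ (HomogeneousIdeal.irrelevant 𝒜).toIdeal.restrictScalars k :=
    iSup_le fun i _ hx => HomogeneousIdeal.mem_irrelevant_of_mem 𝒜 i.succ_pos hx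
  have hge : (HomogeneousIdeal.irrelevant 𝒜).toAddSubmonoid ≤
      (⨆ i : ℕ, 𝒜 (i + 1)).toAddSubmonoid := by
    refine (HomogeneousIdeal.toAddSubmonoid_irrelevant_le 𝒜).2 fun i hi x hx => ?_
    obtain ⟨j, rfl⟩ := Nat.exists_eq_add_one.2 hi
    exact mem_iSup_of_mem j hx
  exact Set.Subset.antisymm hle hge

theorem free_iff_dim_mul_general {k A B C : Type*} [Field k] [CommRing A] [Algebra k A]
    [FiniteDimensional k A] [Ring B] [Algebra k B] [CommRing C] [Algebra k C] [Algebra A C]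
    [IsScalarTower k A C] [Module.Finite A C] {m : Ideal A} (hm : m ≤ Ideal.jacobson ⊥)
    (hres : Function.Surjective (algebraMap k (A ⧸ m))) (π : C →ₐ[k] B)
    (hsurj : Function.Surjective π)
    (hker : RingHom.ker (π : C →+* B) = m.map (algebraMap A C)) :
    Module.Free A C ↔ finrank k C = finrank k A * finrank k B := by
  have hfiber : LinearMap.ker π.toLinearMap = (m • ⊤ : Submodule A C).restrictScalars k := by
    ext c
    rw [Ideal.smul_top_eq_map, ← hker]
    rfl
  rw [free_iff_finrank_eq_mul_finrank_quotient hm hres,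
    ← (π.toLinearMap.quotKerEquivOfSurjective hsurj).finrank_eq, hfiber,
    (Quotient.restrictScalarsEquiv k _).finrank_eq]

/-- Let `A`, `B`, `C` be graded Artinian algebras over a field `k` with
degree-preserving algebra maps `ι : A → C` and `π : C → B`, where `π` is
surjective and `ker(π) = ι(m_A)·C`.  Then `C` is a free `A`-module via `ι` if
and only if `dim_k C = dim_k A · dim_k B`; in this case `C` is a free extension
with base `A` and fiber `B`. -/
theorem free_iff_dim_mul
    {k A B C : Type} [Field k] [CommRing A] [Algebra k A] [CommRing B] [Algebra k B]
    [CommRing C] [Algebra k C]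
    (𝒜 : ℕ → Submodule k A) [GradedAlgebra 𝒜] [FiniteDimensional k A]
    (hconnA : 𝒜 0 = Submodule.span k {(1 : A)})
    (ℬ : ℕ → Submodule k B) [GradedAlgebra ℬ] [FiniteDimensional k B]
    (hconnB : ℬ 0 = Submodule.span k {(1 : B)})
    (𝒞 : ℕ → Submodule k C) [GradedAlgebra 𝒞] [FiniteDimensional k C]
    (hconnC : 𝒞 0 = Submodule.span k {(1 : C)})
    (ι : A →ₐ[k] C) (π : C →ₐ[k] B)
    (hιdeg : ∀ i : ℕ, ∀ x ∈ 𝒜 i, ι x ∈ 𝒞 i)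
    (hπdeg : ∀ i : ℕ, ∀ x ∈ 𝒞 i, π x ∈ ℬ i)
    (hsurj : Function.Surjective π)
    (hker : RingHom.ker (π : C →+* B) = Ideal.span (⇑ι '' gradedMaxSet 𝒜))
    [Algebra A C] (hAC : algebraMap A C = (ι : A →+* C)) :
    (Module.Free A C ↔
      Module.finrank k C = Module.finrank k A * Module.finrank k B) ∧
    (Module.finrank k C = Module.finrank k A * Module.finrank k B →
      -- `C` is a free extension with base `A` and fiber `B`:
      Module.Free A C ∧ Function.Surjective π ∧
        RingHom.ker (π : C →+* B) = Ideal.span (⇑ι '' gradedMaxSet 𝒜)) := by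
  have : IsScalarTower k A C := .of_algebraMap_eq' (by rw [hAC]; exact ι.comp_algebraMap.symm)
  have : Module.Finite A C := .of_restrictScalars_finite k A C
  have hfree := free_iff_dim_mul_general
    ((irrelevant_le_nilradical 𝒜).trans (Ideal.radical_le_jacobson (I := ⊥)))
    (surjective_algebraMap_quotient_irrelevant 𝒜 hconnA.le) π hsurj
    (by rw [hker, gradedMaxSet_eq_irrelevant, hAC]; rfl)
  exact ⟨hfree, fun hdim => ⟨hfree.2 hdim, hsurj, hker⟩⟩
end

section
/- Let V be a finite-dimensional vector space over a field k and let K ⊂ W ⊂ GL(V) be finite non-modular reflection groups (so |W| is invertible in k and both K and W are generated by reflections). If K is not a parabolic subgroup of W, then the relative coinvariant ring R^K_W has no strong Lefschetz element; i.e., R^K_W is not strong Lefschetz. -/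
/-!
A strong Lefschetz element of `R^K_W` is represented by a `K`-invariant linear form `ℓ`, and the
class of `ℓ ^ d` in the top degree `d` of `R^K_W` is nonzero. Let `Q` be the pointwise stabilizer in
`W` of the fixed space `V^K`; by Steinberg's theorem it is a reflection group. A `K`-invariant
linear form is determined by its restriction to `V^K`, so `ℓ` is even `Q`-invariant, and the proper
ideal `(h_W : ℓ ^ d)` is stable under the divided differences `f ↦ (f - s • f) / a` of the
reflections `s ∈ Q` with root `a`. Since these lower degrees, every proper ideal which contains
`h_Q` and is stable under them equals `h_Q`. As `K`-invariants of positive degree kill the top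
degree, `h_K ⊆ (h_W : ℓ ^ d) = h_Q`. Averaging over `K` then gives `R^K = R^Q`, hence `K = Q` is
parabolic.

Steinberg's theorem follows from the same argument, applied to the ideal of a fibre of `V → V/W`
instead of the Hilbert ideal.
-/

open MvPolynomial

set_option synthInstance.maxHeartbeats 1000000
set_option maxHeartbeats 2000000

section InvariantTheory

variable {k : Type} [Field k] {n : ℕ}

/-- The action of `w ∈ GL(V)` (for `V = k^n`) on the polynomial ring
`R = Sym(V^*) = k[x_1, …, x_n]`, given by `(w·f)(v) = f(w⁻¹ v)`. -/
noncomputable def polyAct (w : GL (Fin n) k) :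
    MvPolynomial (Fin n) k →ₐ[k] MvPolynomial (Fin n) k :=
  aeval (fun i => ∑ j, ((w⁻¹ : GL (Fin n) k) : Matrix (Fin n) (Fin n) k) i j • X j)

/-- The subalgebra `R^W ⊆ R` of polynomials invariant under a subgroup
`W ⊆ GL(V)`. -/
noncomputable def invAlg (W : Subgroup (GL (Fin n) k)) :
    Subalgebra k (MvPolynomial (Fin n) k) where
  carrier := {f | ∀ w ∈ W, polyAct w f = f}
  mul_mem' := fun hf hg => fun w hw => by
    rw [map_mul, hf w hw, hg w hw]
  add_mem' := fun hf hg => fun w hw => by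
    rw [map_add, hf w hw, hg w hw]
  algebraMap_mem' := fun c => fun w hw => (polyAct w).commutes c

/-- The Hilbert ideal `h_W ⊆ R`: the ideal generated by the `W`-invariant
polynomials of strictly positive degree (zero constant term). -/
noncomputable def hilbertIdeal (W : Subgroup (GL (Fin n) k)) :
    Ideal (MvPolynomial (Fin n) k) :=
  Ideal.span {f | f ∈ invAlg W ∧ constantCoeff f = 0}

/-- The coinvariant ring `R_W = R/h_W`. -/
noncomputable abbrev CoinvRing (W : Subgroup (GL (Fin n) k)) :=
  MvPolynomial (Fin n) k ⧸ hilbertIdeal W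

/-- The ideal `h_W ∩ R^K` of the invariant ring `R^K`. -/
noncomputable def relIdeal (K W : Subgroup (GL (Fin n) k)) : Ideal (invAlg K) :=
  Ideal.comap ((invAlg K).val : invAlg K →ₐ[k] MvPolynomial (Fin n) k).toRingHom
    (hilbertIdeal W)

/-- The relative coinvariant ring `R^K_W = R^K/(h_W ∩ R^K)`. -/
noncomputable abbrev RelCoinvRing (K W : Subgroup (GL (Fin n) k)) :=
  (invAlg K) ⧸ relIdeal K W

/-- The natural map `ι : R^K_W → R_W` induced by the inclusion `R^K ⊆ R`. -/
noncomputable def relToCoinv (K W : Subgroup (GL (Fin n) k)) :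
    RelCoinvRing K W →ₐ[k] CoinvRing W :=
  Ideal.Quotient.liftₐ (relIdeal K W)
    ((Ideal.Quotient.mkₐ k (hilbertIdeal W)).comp (invAlg K).val)
    (fun a ha => by
      rw [AlgHom.comp_apply, Ideal.Quotient.mkₐ_eq_mk]
      exact Ideal.Quotient.eq_zero_iff_mem.mpr (Ideal.mem_comap.mp ha))

/-- The natural projection `π : R_W → R_K` for `K ≤ W`. -/
noncomputable def coinvProj (K W : Subgroup (GL (Fin n) k)) (hKW : K ≤ W) :
    CoinvRing W →ₐ[k] CoinvRing K :=
  Ideal.Quotient.liftₐ (hilbertIdeal W) (Ideal.Quotient.mkₐ k (hilbertIdeal K))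
    (fun a ha => by
      rw [Ideal.Quotient.mkₐ_eq_mk]
      refine Ideal.Quotient.eq_zero_iff_mem.mpr ?_
      refine Ideal.span_mono ?_ ha
      rintro f ⟨hf, hf0⟩
      exact ⟨fun w hw => hf w (hKW hw), hf0⟩)

/-- A subalgebra `S ⊆ R` is a polynomial ring: it is generated by algebraically
independent homogeneous elements. -/
def IsPolynomialSubalgebra (S : Subalgebra k (MvPolynomial (Fin n) k)) : Prop :=
  ∃ (m : ℕ) (f : Fin m → MvPolynomial (Fin n) k),
    AlgebraicIndependent k f ∧ (∀ i, ∃ d : ℕ, (f i).IsHomogeneous d) ∧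
      Algebra.adjoin k (Set.range f) = S

/-- The maximal graded ideal of the relative coinvariant ring `R^K_W`, as a set:
the image of the `K`-invariants with zero constant term. -/
noncomputable def relMaxSet (K W : Subgroup (GL (Fin n) k)) : Set (RelCoinvRing K W) :=
  (Ideal.Quotient.mk (relIdeal K W)) ''
    {f : invAlg K | constantCoeff (f : MvPolynomial (Fin n) k) = 0}

end InvariantTheory

/-- `g ∈ GL(V)` is a reflection: it has finite order and its fixed-point
subspace is a hyperplane of `V = k^n`. -/
def IsReflection {k : Type} [Field k] {n : ℕ} (g : GL (Fin n) k) : Prop :=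
  IsOfFinOrder g ∧
    Module.finrank k (LinearMap.ker
      (Matrix.mulVecLin (g : Matrix (Fin n) (Fin n) k) - LinearMap.id)) = n - 1

/-- A subgroup `W ⊆ GL(V)` is a reflection group if it is generated by its
reflections. -/
def IsReflectionGroup {k : Type} [Field k] {n : ℕ} (W : Subgroup (GL (Fin n) k)) : Prop :=
  Subgroup.closure {g | g ∈ W ∧ IsReflection g} = W

/-- `K` is a parabolic subgroup of `W` if it is the pointwise stabilizer in `W`
of some subspace `H ⊆ V`. -/
def IsParabolic {k : Type} [Field k] {n : ℕ} (K W : Subgroup (GL (Fin n) k)) : Prop :=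
  ∃ H : Submodule k (Fin n → k), (K : Set (GL (Fin n) k)) =
    {w | w ∈ W ∧ ∀ v ∈ H, Matrix.mulVec (w : Matrix (Fin n) (Fin n) k) v = v}

/-- The grading on the relative coinvariant ring `R^K_W`: the degree-`d` piece
is spanned by the images of the homogeneous degree-`d` `K`-invariants. -/
noncomputable def relGrading {k : Type} [Field k] {n : ℕ}
    (K W : Subgroup (GL (Fin n) k)) (d : ℕ) : Submodule k (RelCoinvRing K W) :=
  Submodule.span k ((Ideal.Quotient.mk (relIdeal K W)) ''
    {f : invAlg K | ((f : MvPolynomial (Fin n) k)).IsHomogeneous d})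

section Action

variable {k : Type} [Field k] {n : ℕ}

lemma polyAct_eq_bind₁ (w : GL (Fin n) k) :
    polyAct w = bind₁ (w⁻¹ : GL (Fin n) k).1.toMvPolynomial := by
  ext i : 1
  simp [polyAct, Matrix.toMvPolynomial, ← C_mul_X_eq_monomial, smul_eq_C_mul]

/-- The action `polyAct` of `GL(V)` on `R = Sym(V^*)`, as an action by ring automorphisms. On
`V = Fin n → k` itself, `GL(V)` acts through Mathlib's action of matrices on vectors. -/
noncomputable instance instMulSemiringActionGL :
    MulSemiringAction (GL (Fin n) k) (MvPolynomial (Fin n) k) where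
  smul w f := polyAct w f
  one_smul f := by
    change polyAct 1 f = f
    rw [polyAct_eq_bind₁, inv_one, Units.val_one, Matrix.toMvPolynomial_one, bind₁_X_left,
      AlgHom.id_apply]
  mul_smul g h f := by
    change polyAct (g * h) f = polyAct g (polyAct h f)
    simp only [polyAct_eq_bind₁, bind₁_bind₁, mul_inv_rev, Units.val_mul,
      ← Matrix.toMvPolynomial_mul]
  smul_zero w := map_zero (polyAct w)
  smul_add w := map_add (polyAct w)
  smul_one w := map_one (polyAct w)
  smul_mul w := map_mul (polyAct w)

lemma smul_C (w : GL (Fin n) k) (c : k) : w • (C c : MvPolynomial (Fin n) k) = C c :=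
  (polyAct w).commutes c

instance : SMulCommClass (GL (Fin n) k) k (MvPolynomial (Fin n) k) where
  smul_comm w c f := map_smul (polyAct w) c f

lemma smul_X (w : GL (Fin n) k) (i : Fin n) :
    w • (X i : MvPolynomial (Fin n) k) = (w⁻¹ : GL (Fin n) k).1.toMvPolynomial i := by
  change polyAct w (X i) = _
  rw [polyAct_eq_bind₁, bind₁_X_right]

lemma mem_invAlg {W : Subgroup (GL (Fin n) k)} {f : MvPolynomial (Fin n) k} :
    f ∈ invAlg W ↔ ∀ w ∈ W, w • f = f := Iff.rfl

lemma invAlg_anti {K W : Subgroup (GL (Fin n) k)} (h : K ≤ W) : invAlg W ≤ invAlg K :=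
  fun _ hf w hw => hf w (h hw)

lemma C_mem_invAlg (W : Subgroup (GL (Fin n) k)) (c : k) : C c ∈ invAlg W :=
  (invAlg W).algebraMap_mem c

lemma eq_of_smul_X_eq {g h : GL (Fin n) k}
    (H : ∀ i, g • (X i : MvPolynomial (Fin n) k) = h • X i) : g = h := by
  rw [← inv_inj]
  refine Units.ext <| Matrix.ext_of_mulVec_single fun j => funext fun i => ?_
  rw [← Matrix.toMvPolynomial_eval_eq_apply, ← Matrix.toMvPolynomial_eval_eq_apply, ← smul_X,
    ← smul_X, H]

lemma eval_smul (w : GL (Fin n) k) (v : Fin n → k) (f : MvPolynomial (Fin n) k) :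
    eval v (w • f) = eval (w⁻¹ • v) f := by
  have h : (aeval v).comp (polyAct w) = (aeval (w⁻¹ • v) : MvPolynomial (Fin n) k →ₐ[k] k) := by
    ext i
    rw [polyAct_eq_bind₁, AlgHom.comp_apply, bind₁_X_right, aeval_X, aeval_eq_eval,
      Matrix.toMvPolynomial_eval_eq_apply]
    rfl
  exact DFunLike.congr_fun h f

lemma constantCoeff_smul (w : GL (Fin n) k) (f : MvPolynomial (Fin n) k) :
    constantCoeff (w • f) = constantCoeff f := by
  simpa only [smul_zero, eval_zero] using eval_smul w 0 f

lemma isHomogeneous_smul (w : GL (Fin n) k) {f : MvPolynomial (Fin n) k} {d : ℕ}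
    (hf : f.IsHomogeneous d) : (w • f).IsHomogeneous d := by
  change (polyAct w f).IsHomogeneous d
  rw [polyAct_eq_bind₁, ← one_mul d]
  exact hf.aeval _ fun i => Matrix.toMvPolynomial_isHomogeneous _ i

lemma homogeneousComponent_smul (w : GL (Fin n) k) (f : MvPolynomial (Fin n) k) (d : ℕ) :
    homogeneousComponent d (w • f) = w • homogeneousComponent d f := by
  conv_lhs => rw [← sum_homogeneousComponent f, Finset.smul_sum, map_sum]
  have h (i : ℕ) : homogeneousComponent d (w • homogeneousComponent i f) =
      if d = i then w • homogeneousComponent i f else 0 :=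
    homogeneousComponent_of_mem (isHomogeneous_smul w (homogeneousComponent_isHomogeneous i f))
  simp only [h]
  rw [Finset.sum_ite_eq]
  split_ifs with hd
  · rfl
  · rw [homogeneousComponent_eq_zero, smul_zero]
    simpa using hd

lemma totalDegree_smul_le (w : GL (Fin n) k) (f : MvPolynomial (Fin n) k) :
    (w • f).totalDegree ≤ f.totalDegree := by
  conv_lhs => rw [← sum_homogeneousComponent f, Finset.smul_sum]
  refine totalDegree_finsetSum_le fun i hi => ?_
  exact (isHomogeneous_smul w (homogeneousComponent_isHomogeneous i f)).totalDegree_le.trans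
    (Nat.lt_succ_iff.mp (Finset.mem_range.mp hi))

lemma sum_smul_mem_invAlg (G : Subgroup (GL (Fin n) k)) [Fintype G]
    (f : MvPolynomial (Fin n) k) : ∑ g : G, g • f ∈ invAlg G := by
  refine mem_invAlg.mpr fun w hw => ?_
  rw [Finset.smul_sum]
  exact Fintype.sum_equiv (Equiv.mulLeft (⟨w, hw⟩ : G)) _ _ fun g => smul_smul w g.1 f

lemma sum_smul_eq_of_mem_invAlg {G : Subgroup (GL (Fin n) k)} [Fintype G]
    {f : MvPolynomial (Fin n) k} (hf : f ∈ invAlg G) :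
    ∑ g : G, g • f = (Nat.card G : k) • f := by
  rw [Finset.sum_congr rfl fun g _ => hf g.1 g.2, Finset.sum_const, Finset.card_univ,
    Nat.card_eq_fintype_card, Nat.cast_smul_eq_nsmul]

lemma finite_of_natCard_cast_ne_zero {R G : Type*} [AddMonoidWithOne R]
    (hmod : (Nat.card G : R) ≠ 0) : Finite G :=
  Nat.finite_of_card_ne_zero fun h => hmod (by rw [h, Nat.cast_zero])

lemma natCard_cast_ne_zero_of_le {R A : Type*} [Semiring R] [Group A] {K W : Subgroup A}
    (hKW : K ≤ W) (hmod : (Nat.card W : R) ≠ 0) : (Nat.card K : R) ≠ 0 :=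
  ne_zero_of_dvd_ne_zero hmod (Nat.cast_dvd_cast (Subgroup.card_dvd_of_le hKW))

end Action

section LinearForm

variable {R σ : Type*} [CommSemiring R] [Fintype σ]

/-- The linear form `∑ i, c i • X i` with coefficient vector `c`. -/
noncomputable def linearForm : (σ → R) →ₗ[R] MvPolynomial σ R :=
  Fintype.linearCombination R X

lemma linearForm_apply (c : σ → R) : linearForm c = ∑ i, c i • X i :=
  rfl

lemma isHomogeneous_linearForm (c : σ → R) : (linearForm c).IsHomogeneous 1 := by
  rw [← mem_homogeneousSubmodule, homogeneousSubmodule_one_eq_span_X,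
    ← Fintype.range_linearCombination]
  exact LinearMap.mem_range_self _ c

lemma exists_linearForm_eq {f : MvPolynomial σ R} (hf : f.IsHomogeneous 1) :
    ∃ c, linearForm c = f := by
  rwa [← mem_homogeneousSubmodule, homogeneousSubmodule_one_eq_span_X,
    ← Fintype.range_linearCombination] at hf

lemma eval_linearForm (v c : σ → R) : eval v (linearForm c) = c ⬝ᵥ v := by
  simp only [linearForm_apply, map_sum, smul_eval, eval_X, dotProduct]

lemma toMvPolynomial_eq_linearForm {m : Type*} (M : Matrix m σ R) (i : m) :
    M.toMvPolynomial i = linearForm (M i) := by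
  simp only [Matrix.toMvPolynomial, linearForm_apply, ← C_mul_X_eq_monomial, smul_eq_C_mul]

end LinearForm

section Reflection

variable {k : Type} [Field k] {n : ℕ}

lemma exists_eq_vecMulVec_of_rank_le_one {m l F : Type*} [Field F] [Fintype l]
    {A : Matrix m l F} (hA : A.rank ≤ 1) : ∃ c t, A = Matrix.vecMulVec c t := by
  classical
  obtain ⟨c, hc⟩ := finrank_le_one_iff.mp hA
  choose t ht using fun j => hc ⟨A.mulVecLin (Pi.single j 1), LinearMap.mem_range_self _ _⟩
  refine ⟨c, t, Matrix.ext_of_mulVec_single fun j => ?_⟩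
  rw [Matrix.vecMulVec_mulVec, dotProduct_single_one, op_smul_eq_smul]
  exact (congrArg Subtype.val (ht j)).symm

lemma finrank_ker_mulVecLin_sub_id (A : Matrix (Fin n) (Fin n) k) :
    Module.finrank k (LinearMap.ker (A.mulVecLin - LinearMap.id)) = n - (A - 1).rank := by
  have h : A.mulVecLin - LinearMap.id = (A - 1).mulVecLin := by
    ext; simp
  have hr := LinearMap.finrank_range_add_finrank_ker (A - 1).mulVecLin
  rw [Module.finrank_fin_fun] at hr
  rw [h, Matrix.rank]
  omega

/-- `a` is a root of `s`: `s` is a reflection and `a = 0` an equation of its hyperplane, encoded by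
the property of `a` that makes the divided difference `f ↦ (f - s • f) / a` defined. -/
structure IsRoot (a : MvPolynomial (Fin n) k) (s : GL (Fin n) k) : Prop where
  isReflection : IsReflection s
  ne_zero : a ≠ 0
  isHomogeneous : a.IsHomogeneous 1
  dvd_sub_smul (f : MvPolynomial (Fin n) k) : a ∣ f - s • f

lemma IsReflection.conj {s : GL (Fin n) k} (hs : IsReflection s) (w : GL (Fin n) k) :
    IsReflection (w * s * w⁻¹) := by
  refine ⟨(MulAut.conj w).toMonoidHom.isOfFinOrder hs.1, ?_⟩
  have hconj : (w * s * w⁻¹).1 - 1 = w.1 * (s.1 - 1) * (w⁻¹).1 := by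
    simp [mul_sub, sub_mul]
  have hdet (g : GL (Fin n) k) : IsUnit g.1.det := g.isUnit.map Matrix.detMonoidHom
  rw [finrank_ker_mulVecLin_sub_id, hconj, Matrix.rank_mul_eq_left_of_isUnit_det _ _ (hdet _),
    Matrix.rank_mul_eq_right_of_isUnit_det _ _ (hdet _), ← finrank_ker_mulVecLin_sub_id, hs.2]

lemma IsRoot.conj {a : MvPolynomial (Fin n) k} {s : GL (Fin n) k} (h : IsRoot a s)
    (w : GL (Fin n) k) : IsRoot (w • a) (w * s * w⁻¹) where
  isReflection := h.isReflection.conj w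
  ne_zero := (smul_ne_zero_iff_ne w).mpr h.ne_zero
  isHomogeneous := isHomogeneous_smul w h.isHomogeneous
  dvd_sub_smul f := by
    have := map_dvd (polyAct w) (h.dvd_sub_smul (w⁻¹ • f))
    change w • a ∣ w • (w⁻¹ • f - s • w⁻¹ • f) at this
    rwa [smul_sub, smul_inv_smul, smul_smul, smul_smul] at this

lemma dvd_sub_smul_of_dvd_X_sub_smul_X {a : MvPolynomial (Fin n) k} {s : GL (Fin n) k}
    (h : ∀ i, a ∣ X i - s • X i) (f : MvPolynomial (Fin n) k) : a ∣ f - s • f := by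
  induction f using MvPolynomial.induction_on with
  | C c => rw [smul_C, sub_self]; exact dvd_zero a
  | add p q hp hq => rw [smul_add, add_sub_add_comm]; exact dvd_add hp hq
  | mul_X p i hp =>
    rw [smul_mul', show p * X i - s • p * s • X i = (p - s • p) * X i + s • p * (X i - s • X i) by
      ring]
    exact dvd_add (hp.mul_right _) ((h i).mul_left _)

lemma IsReflection.exists_isRoot {s : GL (Fin n) k} (hs : IsReflection s) (hs1 : s ≠ 1) :
    ∃ a, IsRoot a s := by
  have hrank : (s.1 - 1).rank ≤ 1 := by
    have h := hs.2
    rw [finrank_ker_mulVecLin_sub_id] at h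
    have := (s.1 - 1).rank_le_width
    omega
  obtain ⟨c, t, hct⟩ := exists_eq_vecMulVec_of_rank_le_one hrank
  set a := linearForm (Matrix.vecMul t (s⁻¹).1)
  have hX (i : Fin n) : X i - s • X i = c i • a := by
    have h : 1 - (s⁻¹).1 = Matrix.vecMulVec c (Matrix.vecMul t (s⁻¹).1) := by
      rw [← Matrix.vecMulVec_mul, ← hct, sub_mul, one_mul, Units.mul_inv]
    have hid : (X i : MvPolynomial (Fin n) k) = (1 : Matrix _ _ k).toMvPolynomial i := by
      rw [Matrix.toMvPolynomial_one]
    rw [smul_X, hid, toMvPolynomial_eq_linearForm, toMvPolynomial_eq_linearForm, ← map_sub,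
      ← map_smul]
    exact congrArg linearForm (congrFun h i)
  have ha : a ≠ 0 := fun h0 => hs1 <| eq_of_smul_X_eq fun i => by
    rw [one_smul, ← sub_eq_zero, ← neg_sub, hX, h0, smul_zero, neg_zero]
  exact ⟨a, hs, ha, isHomogeneous_linearForm _, dvd_sub_smul_of_dvd_X_sub_smul_X fun i => by
    rw [hX, smul_eq_C_mul]; exact dvd_mul_left _ _⟩

/-- The subgroup of `G` generated by the reflections in `G`; it is `G` exactly when `G` is a
reflection group. -/
def reflectionSubgroup (G : Subgroup (GL (Fin n) k)) : Subgroup (GL (Fin n) k) :=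
  Subgroup.closure {s | s ∈ G ∧ IsReflection s}

lemma reflectionSubgroup_le (G : Subgroup (GL (Fin n) k)) : reflectionSubgroup G ≤ G :=
  (Subgroup.closure_le G).mpr fun _ hs => hs.1

lemma le_normalizer_reflectionSubgroup (G : Subgroup (GL (Fin n) k)) :
    G ≤ Subgroup.normalizer (reflectionSubgroup G) :=
  Subgroup.le_normalizer_closure_iff.mpr fun w hw _ hs =>
    Subgroup.subset_closure ⟨G.mul_mem (G.mul_mem hw hs.1) (G.inv_mem hw), hs.2.conj w⟩

end Reflection

lemma sub_smul_mem_of_mem_closure {G A : Type*} [Group G] [AddCommGroup A] [DistribMulAction G A]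
    {S : Set G} {J : AddSubgroup A} (hJ : ∀ g ∈ Subgroup.closure S, ∀ x ∈ J, g • x ∈ J) {x : A}
    (hx : ∀ s ∈ S, x - s • x ∈ J) {g : G} (hg : g ∈ Subgroup.closure S) : x - g • x ∈ J := by
  induction hg using Subgroup.closure_induction with
  | mem s hs => exact hx s hs
  | one => rw [one_smul, sub_self]; exact J.zero_mem
  | mul g h hg _ ihg ihh =>
    have := J.add_mem ihg (hJ g hg _ ihh)
    rwa [smul_sub, smul_smul, sub_add_sub_cancel] at this
  | inv g hg ih =>
    have := J.neg_mem (hJ g⁻¹ (inv_mem hg) _ ih)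
    rwa [smul_sub, inv_smul_smul, neg_sub] at this

section DividedDifference

variable {k : Type} [Field k] {n : ℕ} {G : Subgroup (GL (Fin n) k)}

lemma smul_mem_span_of_subset_invAlg {S : Set (MvPolynomial (Fin n) k)} (hS : S ⊆ invAlg G)
    {g : GL (Fin n) k} (hg : g ∈ G) {f : MvPolynomial (Fin n) k} (hf : f ∈ Ideal.span S) :
    g • f ∈ Ideal.span S := by
  have : Ideal.span S ≤ (Ideal.span S).comap (polyAct g) := Ideal.span_le.mpr fun F hF =>
    Ideal.mem_comap.mpr <| (hS hF g hg).symm ▸ Ideal.subset_span hF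
  exact this hf

/-- `I` is stable under the divided differences `f ↦ (f - s • f) / a` of all reflections `s ∈ G`,
where `a` is a root of `s`. -/
def IsDividedStable (G : Subgroup (GL (Fin n) k)) (I : Ideal (MvPolynomial (Fin n) k)) : Prop :=
  ∀ s ∈ G, ∀ a, IsRoot a s → ∀ f ∈ I, ∀ q, f - s • f = a * q → q ∈ I

lemma isDividedStable_span {S : Set (MvPolynomial (Fin n) k)} (hS : S ⊆ invAlg G) :
    IsDividedStable G (Ideal.span S) := by
  intro s hs a ha f hf
  induction hf using Submodule.closure_induction with
  | zero =>
    intro q hq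
    rw [smul_zero, sub_zero, eq_comm, mul_eq_zero_iff_left ha.ne_zero] at hq
    exact hq ▸ zero_mem _
  | add f g _ _ ihf ihg =>
    intro q hq
    obtain ⟨p, hp⟩ := ha.dvd_sub_smul f
    obtain ⟨r, hr⟩ := ha.dvd_sub_smul g
    rw [smul_add, add_sub_add_comm, hp, hr, ← mul_add] at hq
    exact mul_left_cancel₀ ha.ne_zero hq ▸ add_mem (ihf p hp) (ihg r hr)
  | smul_mem p F hF =>
    intro q hq
    obtain ⟨r, hr⟩ := ha.dvd_sub_smul p
    rw [smul_eq_mul, smul_mul', mem_invAlg.mp (hS hF) s hs, ← sub_mul, hr, mul_assoc] at hq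
    exact mul_left_cancel₀ ha.ne_zero hq ▸ Ideal.mul_mem_left _ _ (Ideal.subset_span hF)

lemma IsRoot.totalDegree_lt {a : MvPolynomial (Fin n) k} {s : GL (Fin n) k} (ha : IsRoot a s)
    {f q : MvPolynomial (Fin n) k} (hq : f - s • f = a * q) (hq0 : q ≠ 0) :
    q.totalDegree < f.totalDegree := by
  have hmul := totalDegree_mul_of_isDomain ha.ne_zero hq0
  have hsub := totalDegree_sub f (s • f)
  rw [hq, hmul, ha.isHomogeneous.totalDegree ha.ne_zero,
    max_eq_left (totalDegree_smul_le s f)] at hsub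
  omega

/-- The ideal generated by the `G`-invariants vanishing at `v`; it cuts out the fibre through `v`
of the quotient map `V → V/G`. -/
noncomputable def fibreIdeal (G : Subgroup (GL (Fin n) k)) (v : Fin n → k) :
    Ideal (MvPolynomial (Fin n) k) :=
  Ideal.span {f | f ∈ invAlg G ∧ eval v f = 0}

lemma sub_C_eval_mem_fibreIdeal {F : MvPolynomial (Fin n) k} (hF : F ∈ invAlg G)
    (v : Fin n → k) : F - C (eval v F) ∈ fibreIdeal G v :=
  Ideal.subset_span ⟨sub_mem hF (C_mem_invAlg G _), by simp⟩

lemma exists_sub_C_mem_fibreIdeal (hmod : (Nat.card G : k) ≠ 0) {v : Fin n → k}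
    {f : MvPolynomial (Fin n) k} (hf : ∀ g ∈ G, f - g • f ∈ fibreIdeal G v) :
    ∃ c, f - C c ∈ fibreIdeal G v := by
  have := finite_of_natCard_cast_ne_zero hmod
  have := Fintype.ofFinite G
  set F := ∑ g : G, g • f
  have hF : (Nat.card G : k) • f - F ∈ fibreIdeal G v := by
    have h : ∑ g : G, (f - g • f) ∈ fibreIdeal G v := sum_mem fun g _ => hf g.1 g.2
    rwa [Finset.sum_sub_distrib, Finset.sum_const, Finset.card_univ, ← Nat.card_eq_fintype_card,
      ← Nat.cast_smul_eq_nsmul k] at h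
  have h := add_mem hF (sub_C_eval_mem_fibreIdeal (sum_smul_mem_invAlg G f) v)
  rw [sub_add_sub_cancel] at h
  refine ⟨(Nat.card G : k)⁻¹ * eval v F, ?_⟩
  have h' := (fibreIdeal G v).mul_mem_left (C (Nat.card G : k)⁻¹) h
  rwa [mul_sub, ← smul_eq_C_mul, smul_smul, inv_mul_cancel₀ hmod, one_smul, ← C_mul] at h'

lemma eq_zero_of_C_mem {σ : Type*} {I : Ideal (MvPolynomial σ k)} (hI : I ≠ ⊤) {c : k}
    (hc : C c ∈ I) : c = 0 := by
  by_contra h0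
  exact hI (I.eq_top_of_isUnit_mem hc ((IsUnit.mk0 c h0).map C))

/-- Divided differences lower the degree, so by induction every element of `I` is congruent to all
its `G`-translates modulo the fibre ideal, hence to its average, hence to a constant. -/
theorem le_fibreIdeal_of_isDividedStable (hmod : (Nat.card G : k) ≠ 0) (hG : IsReflectionGroup G)
    {I : Ideal (MvPolynomial (Fin n) k)} {v : Fin n → k} (hvI : fibreIdeal G v ≤ I) (hI : I ≠ ⊤)
    (hst : IsDividedStable G I) : I ≤ fibreIdeal G v := by
  intro f
  induction hd : f.totalDegree using Nat.strong_induction_on generalizing f with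
  | _ d ih =>
  subst hd
  intro hf
  have hrefl (s : GL (Fin n) k) (hs : s ∈ {s | s ∈ G ∧ IsReflection s}) :
      f - s • f ∈ fibreIdeal G v := by
    rcases eq_or_ne s 1 with rfl | hs1
    · rw [one_smul, sub_self]; exact zero_mem _
    obtain ⟨a, ha⟩ := hs.2.exists_isRoot hs1
    obtain ⟨q, hq⟩ := ha.dvd_sub_smul f
    rcases eq_or_ne q 0 with rfl | hq0
    · rw [hq, mul_zero]; exact zero_mem _
    rw [hq]
    exact Ideal.mul_mem_left _ _
      (ih _ (ha.totalDegree_lt hq hq0) rfl (hst s hs.1 a ha f hf q hq))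
  have hstable (g) (hg : g ∈ Subgroup.closure {s | s ∈ G ∧ IsReflection s}) (p)
      (hp : p ∈ (fibreIdeal G v).toAddSubgroup) : g • p ∈ (fibreIdeal G v).toAddSubgroup :=
    smul_mem_span_of_subset_invAlg (fun _ hF => hF.1) (hG.le hg) hp
  obtain ⟨c, hc⟩ := exists_sub_C_mem_fibreIdeal hmod fun g hg =>
    sub_smul_mem_of_mem_closure hstable hrefl (hG.ge hg)
  have hcI : C c ∈ I := by simpa using sub_mem hf (hvI hc)
  rwa [eq_zero_of_C_mem hI hcI, C_0, sub_zero] at hc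

end DividedDifference

lemma mem_idealOfVars_iff {σ R : Type*} [CommSemiring R] {p : MvPolynomial σ R} :
    p ∈ idealOfVars σ R ↔ constantCoeff p = 0 := by
  rw [← pow_one (idealOfVars σ R), mem_pow_idealOfVars_iff', constantCoeff_eq]
  simp [Finsupp.degree_eq_zero_iff]

lemma idealOfVars_ne_top (σ R : Type*) [CommSemiring R] [Nontrivial R] : idealOfVars σ R ≠ ⊤ :=
  (Ideal.ne_top_iff_one _).mpr fun h =>
    one_ne_zero ((map_one constantCoeff).symm.trans (mem_idealOfVars_iff.mp h))

section HilbertIdeal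

variable {k : Type} [Field k] {n : ℕ} {G : Subgroup (GL (Fin n) k)}

lemma hilbertIdeal_eq_fibreIdeal (G : Subgroup (GL (Fin n) k)) :
    hilbertIdeal G = fibreIdeal G 0 := by
  simp only [hilbertIdeal, fibreIdeal, eval_zero]

lemma isDividedStable_hilbertIdeal (G : Subgroup (GL (Fin n) k)) :
    IsDividedStable G (hilbertIdeal G) :=
  isDividedStable_span fun _ hF => hF.1

lemma hilbertIdeal_le_idealOfVars (G : Subgroup (GL (Fin n) k)) :
    hilbertIdeal G ≤ idealOfVars (Fin n) k :=
  Ideal.span_le.mpr fun _ hF => mem_idealOfVars_iff.mpr hF.2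

lemma hilbertIdeal_ne_top (G : Subgroup (GL (Fin n) k)) : hilbertIdeal G ≠ ⊤ :=
  ne_top_of_le_ne_top (idealOfVars_ne_top _ _) (hilbertIdeal_le_idealOfVars G)

lemma hilbertIdeal_anti {K W : Subgroup (GL (Fin n) k)} (h : K ≤ W) :
    hilbertIdeal W ≤ hilbertIdeal K :=
  Ideal.span_mono fun _ hf => ⟨invAlg_anti h hf.1, hf.2⟩

lemma smul_mem_invAlg_of_mem_normalizer {g : GL (Fin n) k}
    (hg : g ∈ Subgroup.normalizer (G : Set (GL (Fin n) k))) {f : MvPolynomial (Fin n) k}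
    (hf : f ∈ invAlg G) : g • f ∈ invAlg G := by
  refine mem_invAlg.mpr fun p hp => ?_
  have hconj : g⁻¹ * p * g ∈ G := (Subgroup.mem_normalizer_iff''.mp hg p).mp hp
  rw [smul_smul, show p * g = g * (g⁻¹ * p * g) by group, ← smul_smul,
    mem_invAlg.mp hf _ hconj]

lemma smul_mem_hilbertIdeal_of_mem_normalizer {g : GL (Fin n) k}
    (hg : g ∈ Subgroup.normalizer (G : Set (GL (Fin n) k))) {f : MvPolynomial (Fin n) k}
    (hf : f ∈ hilbertIdeal G) : g • f ∈ hilbertIdeal G := by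
  have h : hilbertIdeal G ≤ (hilbertIdeal G).comap (polyAct g) := Ideal.span_le.mpr fun F hF =>
    Ideal.subset_span ⟨smul_mem_invAlg_of_mem_normalizer hg hF.1,
      (constantCoeff_smul g F).trans hF.2⟩
  exact h hf

/-- The lower coefficients of the monic polynomial `∏ g : G, (T - g • f)` are invariants without
constant term, and `f` is one of its roots. -/
lemma pow_card_mem_hilbertIdeal [Finite G] {f : MvPolynomial (Fin n) k}
    (hf : constantCoeff f = 0) : f ^ Nat.card G ∈ hilbertIdeal G := by
  have := Fintype.ofFinite G
  set Q := MulSemiringAction.charpoly G f with hQ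
  have hdeg : Q.natDegree = Nat.card G := by
    rw [hQ, MulSemiringAction.charpoly_eq,
      Polynomial.natDegree_prod_of_monic _ _ fun g _ => Polynomial.monic_X_sub_C _]
    simp
  have hmap : Q.map constantCoeff = Polynomial.X ^ Nat.card G := by
    have h (g : G) : constantCoeff (g • f) = 0 := (constantCoeff_smul g.1 f).trans hf
    simp [hQ, MulSemiringAction.charpoly_eq, Polynomial.map_prod, h]
  have hcoeff (i : ℕ) (hi : i ∈ Finset.range (Nat.card G)) :
      Q.coeff i * f ^ i ∈ hilbertIdeal G := by
    refine Ideal.mul_mem_right _ _ (Ideal.subset_span ⟨mem_invAlg.mpr fun w hw => ?_, ?_⟩)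
    · exact MulSemiringAction.smul_coeff_charpoly f i (⟨w, hw⟩ : G)
    · rw [← Polynomial.coeff_map, hmap, Polynomial.coeff_X_pow,
        if_neg (Finset.mem_range.mp hi).ne]
  have hroot : Q.eval f = 0 := MulSemiringAction.eval_charpoly G f
  rw [Polynomial.eval_eq_sum_range, Finset.sum_range_succ,
    (MulSemiringAction.monic_charpoly G f).coeff_natDegree, one_mul, hdeg] at hroot
  rw [eq_neg_of_add_eq_zero_right hroot]
  exact neg_mem (sum_mem hcoeff)

lemma mem_hilbertIdeal_of_mul_mem [Finite G] {b q : MvPolynomial (Fin n) k}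
    (hb : constantCoeff b ≠ 0) (h : b * q ∈ hilbertIdeal G) : q ∈ hilbertIdeal G := by
  let π := Ideal.Quotient.mk (hilbertIdeal G)
  have hnil : IsNilpotent (π (b - C (constantCoeff b))) :=
    ⟨Nat.card G, by
      rw [← map_pow, Ideal.Quotient.eq_zero_iff_mem]
      exact pow_card_mem_hilbertIdeal (by simp)⟩
  have hunit : IsUnit (π (C (constantCoeff b))) := ((IsUnit.mk0 _ hb).map C).map π
  have hb' : IsUnit (π b) := by
    simpa using hnil.isUnit_add_left_of_commute hunit (Commute.all _ _)
  rw [← Ideal.Quotient.eq_zero_iff_mem] at h ⊢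
  rw [map_mul] at h
  exact hb'.mul_right_eq_zero.mp h

variable (G) in
lemma exists_forall_isHomogeneous_mem_hilbertIdeal [Finite G] :
    ∃ N, ∀ d ≥ N, ∀ f : MvPolynomial (Fin n) k, f.IsHomogeneous d → f ∈ hilbertIdeal G := by
  have hrad : idealOfVars (Fin n) k ≤ (hilbertIdeal G).radical := fun f hf =>
    ⟨Nat.card G, pow_card_mem_hilbertIdeal (mem_idealOfVars_iff.mp hf)⟩
  obtain ⟨N, hN⟩ := Ideal.exists_pow_le_of_le_radical_of_fg hrad (idealOfVars_fg _ _)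
  refine ⟨N, fun d hd f hf => hN ((mem_pow_idealOfVars_iff ..).mpr fun x hx => ?_)⟩
  rw [Finsupp.degree_eq_weight_one]
  exact hd.trans (hf (mem_support_iff.mp hx)).ge

end HilbertIdeal

section RecoveringGroup

lemma exists_smul_eq_of_fixes_invariants {A B : Type*} [Group A] [CommRing B] [IsDomain B]
    [MulSemiringAction A B] {K : Subgroup A} [Finite K] {g : A}
    (hg : ∀ f : B, (∀ x ∈ K, x • f = f) → g • f = f) (b : B) : ∃ x ∈ K, g • b = x • b := by
  have := Fintype.ofFinite K
  set Q := MulSemiringAction.charpoly K b with hQ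
  have hgQ : g • Q = Q := Polynomial.ext fun i => by
    rw [Polynomial.coeff_smul]
    exact hg _ fun x hx => MulSemiringAction.smul_coeff_charpoly b i (⟨x, hx⟩ : K)
  have hroot : Q.eval (g • b) = 0 := by
    rw [← hgQ, Polynomial.smul_eval_smul, MulSemiringAction.eval_charpoly, smul_zero]
  rw [hQ, MulSemiringAction.charpoly_eq, Polynomial.eval_prod, Finset.prod_eq_zero_iff] at hroot
  obtain ⟨x, -, hx⟩ := hroot
  rw [Polynomial.eval_sub, Polynomial.eval_X, Polynomial.eval_C, sub_eq_zero] at hx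
  exact ⟨x, x.2, hx⟩

variable {k : Type} [Field k] {n : ℕ} {K : Subgroup (GL (Fin n) k)}

lemma mem_of_fixes_invAlg [Finite K] {g : GL (Fin n) k} (hg : ∀ f ∈ invAlg K, g • f = f) :
    g ∈ K := by
  -- For this generic linear form `b`, the element `w` can be recovered from `w • b`.
  let b : Polynomial (MvPolynomial (Fin n) k) := ∑ i : Fin n, Polynomial.monomial i (X i)
  have hb (w : GL (Fin n) k) (i : Fin n) : (w • b).coeff i = w • X i := by
    simp [b, Polynomial.coeff_smul, Polynomial.finsetSum_coeff, Polynomial.coeff_monomial,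
      Fin.val_inj]
  obtain ⟨x, hx, hgx⟩ := exists_smul_eq_of_fixes_invariants (K := K) (g := g) (B := Polynomial _)
    (fun f hf => Polynomial.ext fun i => by
      rw [Polynomial.coeff_smul]
      exact hg _ fun x hx => by
        conv_rhs => rw [← hf x hx, Polynomial.coeff_smul]
        rfl) b
  have hgx' : g = x := eq_of_smul_X_eq fun i => by rw [← hb, ← hb, hgx]
  rwa [hgx']

lemma smul_sum_smul_sub_mem_pow_succ {K' : Subgroup (GL (Fin n) k)} [Fintype K] (hKK' : K ≤ K')
    {g : GL (Fin n) k} (hg : g ∈ K') {N : ℕ}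
    (hN : ∀ f ∈ invAlg K, g • f - f ∈ idealOfVars (Fin n) k ^ N)
    {f : MvPolynomial (Fin n) k} (hf : f ∈ hilbertIdeal K') :
    g • ∑ x : K, x • f - ∑ x : K, x • f ∈
      idealOfVars (Fin n) k ^ (N + 1) := by
  induction hf using Submodule.closure_induction with
  | zero => simp only [smul_zero, Finset.sum_const_zero, sub_zero, zero_mem]
  | add p q _ _ hp hq =>
    simp only [smul_add, Finset.sum_add_distrib]
    rw [add_sub_add_comm]
    exact add_mem hp hq
  | smul_mem p F hF =>
    have hsum : ∑ x : K, x • (p * F) = (∑ x : K, x • p) * F := by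
      rw [Finset.sum_mul]
      refine Finset.sum_congr rfl fun x _ => ?_
      rw [smul_mul', Subgroup.smul_def x F, mem_invAlg.mp hF.1 x (hKK' x.2)]
    rw [smul_eq_mul, hsum, smul_mul', mem_invAlg.mp hF.1 g hg, ← sub_mul, pow_succ]
    exact Ideal.mul_mem_mul (hN _ (sum_smul_mem_invAlg K p)) (mem_idealOfVars_iff.mpr hF.2)

lemma smul_sub_mem_pow_of_hilbertIdeal_le {K' : Subgroup (GL (Fin n) k)} (hKK' : K ≤ K')
    (hmod : (Nat.card K : k) ≠ 0) (h : hilbertIdeal K ≤ hilbertIdeal K') {g : GL (Fin n) k}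
    (hg : g ∈ K') (N : ℕ) (f : MvPolynomial (Fin n) k) (hf : f ∈ invAlg K) :
    g • f - f ∈ idealOfVars (Fin n) k ^ N := by
  have := finite_of_natCard_cast_ne_zero hmod
  have := Fintype.ofFinite K
  induction N generalizing f with
  | zero => simp
  | succ N ih =>
    have hf₀ : f - C (constantCoeff f) ∈ invAlg K := sub_mem hf (C_mem_invAlg K _)
    have hmem := smul_sum_smul_sub_mem_pow_succ hKK' hg ih
      (h (Ideal.subset_span ⟨hf₀, by simp⟩))
    rw [sum_smul_eq_of_mem_invAlg hf₀, smul_comm, ← smul_sub, smul_sub g, smul_C,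
      sub_sub_sub_cancel_right] at hmem
    simpa only [smul_smul, inv_mul_cancel₀ hmod, one_smul] using
      Submodule.smul_of_tower_mem _ (Nat.card K : k)⁻¹ hmem

/-- By averaging over `K`, if every `K`-invariant is fixed by `g ∈ K'` modulo the `N`-th power of
the ideal of the origin, then also modulo the next power; hence `g` fixes `R^K`. -/
theorem le_of_hilbertIdeal_le {K' : Subgroup (GL (Fin n) k)} (hKK' : K ≤ K')
    (hmod : (Nat.card K : k) ≠ 0) (h : hilbertIdeal K ≤ hilbertIdeal K') : K' ≤ K := by
  have := finite_of_natCard_cast_ne_zero hmod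
  intro g hg
  refine mem_of_fixes_invAlg fun f hf => sub_eq_zero.mp ?_
  have hbot : ⨅ N, idealOfVars (Fin n) k ^ N = ⊥ :=
    Ideal.iInf_pow_eq_bot_of_isDomain _ (idealOfVars_ne_top (Fin n) k)
  rw [← Ideal.mem_bot, ← hbot, Submodule.mem_iInf]
  exact fun N => smul_sub_mem_pow_of_hilbertIdeal_le hKK' hmod h hg N f hf

end RecoveringGroup

section Translation

variable {σ R : Type*} [CommRing R]

/-- The translation `f(x) ↦ f(x + v)`, an algebra endomorphism of the polynomial ring. -/
noncomputable def translateHom (v : σ → R) : MvPolynomial σ R →ₐ[R] MvPolynomial σ R :=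
  aeval fun i => X i + C (v i)

lemma translateHom_X (v : σ → R) (i : σ) : translateHom v (X i) = X i + C (v i) :=
  aeval_X _ i

lemma translateHom_C (v : σ → R) (c : R) : translateHom v (C c) = C c :=
  (translateHom v).commutes c

lemma constantCoeff_translateHom (v : σ → R) (f : MvPolynomial σ R) :
    constantCoeff (translateHom v f) = eval v f := by
  have h : constantCoeff.comp (translateHom v).toRingHom = eval v := by
    ext i <;> simp [translateHom_X]
  exact RingHom.congr_fun h f

lemma translateHom_translateHom_neg (v : σ → R) (f : MvPolynomial σ R) :
    translateHom v (translateHom (-v) f) = f := by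
  have h : (translateHom v).comp (translateHom (-v)) = AlgHom.id R _ := by
    ext i : 1
    simp [translateHom_X]
  exact AlgHom.congr_fun h f

lemma translateHom_eq_add_C_of_isHomogeneous_one [Finite σ] (v : σ → R) {a : MvPolynomial σ R}
    (ha : a.IsHomogeneous 1) : translateHom v a = a + C (eval v a) := by
  have := Fintype.ofFinite σ
  obtain ⟨c, rfl⟩ := exists_linearForm_eq ha
  simp only [linearForm_apply, map_sum, smul_eq_C_mul, map_mul, translateHom_C, translateHom_X,
    mul_add, Finset.sum_add_distrib, eval_C, eval_X]

lemma exists_eval_ne_zero_and_eval_eq_zero [IsDomain R] {S : Set (σ → R)} (hS : S.Finite)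
    {v : σ → R} (hv : v ∉ S) :
    ∃ e : MvPolynomial σ R, eval v e ≠ 0 ∧ ∀ u ∈ S, eval u e = 0 := by
  induction S, hS using Set.Finite.induction_on with
  | empty => exact ⟨1, by simp⟩
  | @insert u S _ _ ih =>
    rw [Set.mem_insert_iff, not_or] at hv
    obtain ⟨e, hev, heS⟩ := ih hv.2
    obtain ⟨i, hi⟩ := Function.ne_iff.mp hv.1
    refine ⟨(X i - C (u i)) * e, ?_, ?_⟩
    · simpa using ⟨sub_ne_zero.mpr hi, hev⟩
    · rintro w (rfl | hw)
      · simp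
      · rw [map_mul, heS w hw, mul_zero]

end Translation

section Stabilizer

lemma fixingSubgroup_span {G R M : Type*} [Group G] [Semiring R] [AddCommMonoid M] [Module R M]
    [DistribMulAction G M] [SMulCommClass G R M] (S : Set M) :
    fixingSubgroup G (Submodule.span R S : Set M) = fixingSubgroup G S := by
  refine le_antisymm (fixingSubgroup_antitone G M Submodule.subset_span) fun g hg => ?_
  rw [mem_fixingSubgroup_iff] at hg ⊢
  intro x hx
  induction hx using Submodule.span_induction with
  | mem x hx => exact hg x hx
  | zero => exact smul_zero g
  | add x y _ _ hx hy => rw [smul_add, hx, hy]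
  | smul c x _ hx => rw [smul_comm, hx]

variable {k : Type} [Field k] {n : ℕ} {W P : Subgroup (GL (Fin n) k)} {v : Fin n → k}

lemma translateHom_smul_of_mem_stabilizer {w : GL (Fin n) k}
    (hw : w ∈ MulAction.stabilizer (GL (Fin n) k) v) (f : MvPolynomial (Fin n) k) :
    translateHom v (w • f) = w • translateHom v f := by
  have hX (i : Fin n) : translateHom v (w • X i) = w • translateHom v (X i) := by
    rw [translateHom_eq_add_C_of_isHomogeneous_one v (isHomogeneous_smul w (isHomogeneous_X k i)),
      eval_smul, MulAction.mem_stabilizer_iff.mp (inv_mem hw), eval_X, translateHom_X, smul_add,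
      smul_C]
  induction f using MvPolynomial.induction_on with
  | C c => rw [smul_C, translateHom_C, smul_C]
  | add f g hf hg => rw [smul_add, map_add, map_add, hf, hg, smul_add]
  | mul_X f i hf => rw [smul_mul', map_mul, map_mul, hf, hX, smul_mul']

lemma IsRoot.mem_stabilizer {a : MvPolynomial (Fin n) k} {s : GL (Fin n) k} (ha : IsRoot a s)
    (hv : eval v a = 0) : s ∈ MulAction.stabilizer (GL (Fin n) k) v := by
  rw [← inv_mem_iff, MulAction.mem_stabilizer_iff]
  funext i
  obtain ⟨q, hq⟩ := ha.dvd_sub_smul (X i)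
  have h := congrArg (eval v) hq
  rwa [map_sub, eval_smul, map_mul, hv, zero_mul, eval_X, eval_X, sub_eq_zero, eq_comm] at h

/-- The polynomials which near every point of the orbit `W • v` lie in the translate to that point
of the Hilbert ideal of the corresponding conjugate of `P`. For `P` the stabilizer of `v`, this is
the fibre of `V → V/W` through `v`. -/
noncomputable def orbitIdeal (W P : Subgroup (GL (Fin n) k)) (v : Fin n → k) :
    Ideal (MvPolynomial (Fin n) k) :=
  ⨅ w : W, (hilbertIdeal P).comap ((translateHom v).comp (polyAct w.1))

lemma mem_orbitIdeal {f : MvPolynomial (Fin n) k} :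
    f ∈ orbitIdeal W P v ↔ ∀ w ∈ W, translateHom v (w • f) ∈ hilbertIdeal P := by
  simp only [orbitIdeal, Ideal.mem_iInf, Subtype.forall]
  rfl

lemma orbitIdeal_ne_top : orbitIdeal W P v ≠ ⊤ := by
  rw [Ideal.ne_top_iff_one]
  intro h
  have h1 := mem_orbitIdeal.mp h 1 W.one_mem
  rw [smul_one, map_one, ← Ideal.eq_top_iff_one] at h1
  exact hilbertIdeal_ne_top P h1

lemma smul_mem_orbitIdeal {g : GL (Fin n) k} (hg : g ∈ W) {f : MvPolynomial (Fin n) k}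
    (hf : f ∈ orbitIdeal W P v) : g • f ∈ orbitIdeal W P v :=
  mem_orbitIdeal.mpr fun w hw => smul_smul w g f ▸ mem_orbitIdeal.mp hf _ (W.mul_mem hw hg)

lemma translateHom_mem_hilbertIdeal_of_mem_fibreIdeal
    (hP : P ≤ W ⊓ MulAction.stabilizer (GL (Fin n) k) v) {f : MvPolynomial (Fin n) k}
    (hf : f ∈ fibreIdeal W v) : translateHom v f ∈ hilbertIdeal P := by
  have h : fibreIdeal W v ≤ (hilbertIdeal P).comap (translateHom v) :=
    Ideal.span_le.mpr fun F hF => Ideal.subset_span ⟨mem_invAlg.mpr fun p hp => by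
      rw [← translateHom_smul_of_mem_stabilizer (hP hp).2, mem_invAlg.mp hF.1 p (hP hp).1],
      (constantCoeff_translateHom v F).trans hF.2⟩
  exact h hf

lemma fibreIdeal_le_orbitIdeal (hP : P ≤ W ⊓ MulAction.stabilizer (GL (Fin n) k) v) :
    fibreIdeal W v ≤ orbitIdeal W P v := fun _ hf =>
  mem_orbitIdeal.mpr fun _ hw => translateHom_mem_hilbertIdeal_of_mem_fibreIdeal hP
    (smul_mem_span_of_subset_invAlg (fun _ hF => hF.1) hw hf)

lemma IsRoot.translateHom_mem_hilbertIdeal [Finite P] {a : MvPolynomial (Fin n) k}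
    {s : GL (Fin n) k} (ha : IsRoot a s)
    (hs : s ∈ MulAction.stabilizer (GL (Fin n) k) v → s ∈ P) {f q : MvPolynomial (Fin n) k}
    (hf : translateHom v f ∈ hilbertIdeal P) (hsf : translateHom v (s • f) ∈ hilbertIdeal P)
    (hq : f - s • f = a * q) : translateHom v q ∈ hilbertIdeal P := by
  have htq : translateHom v f - translateHom v (s • f) = translateHom v a * translateHom v q := by
    rw [← map_sub, hq, map_mul]
  by_cases ha0 : eval v a = 0
  · have hsv := ha.mem_stabilizer ha0
    rw [translateHom_smul_of_mem_stabilizer hsv,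
      translateHom_eq_add_C_of_isHomogeneous_one v ha.isHomogeneous, ha0, C_0, add_zero] at htq
    exact isDividedStable_hilbertIdeal P s (hs hsv) a ha _ hf _ htq
  · exact mem_hilbertIdeal_of_mul_mem (constantCoeff_translateHom v a ▸ ha0)
      (htq ▸ sub_mem hf hsf)

lemma isDividedStable_orbitIdeal [Finite P]
    (hP : ∀ s ∈ W, IsReflection s → s ∈ MulAction.stabilizer (GL (Fin n) k) v → s ∈ P) :
    IsDividedStable W (orbitIdeal W P v) := by
  intro s hs a ha f hf q hq
  refine mem_orbitIdeal.mpr fun w hw => ?_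
  have hconj : w * s * w⁻¹ ∈ W := W.mul_mem (W.mul_mem hw hs) (W.inv_mem hw)
  have hwq : w • f - (w * s * w⁻¹) • w • f = w • a * w • q := by
    rw [smul_smul, inv_mul_cancel_right, mul_smul, ← smul_sub, hq, smul_mul']
  have hwf := smul_mem_orbitIdeal hw hf
  refine (ha.conj w).translateHom_mem_hilbertIdeal (hP _ hconj (ha.isReflection.conj w)) ?_
    (mem_orbitIdeal.mp hwf _ hconj) hwq
  exact mem_orbitIdeal.mp hf w hw

lemma pow_card_mul_translateHom_neg_mem_orbitIdeal [Finite P]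
    (hP : W ⊓ MulAction.stabilizer (GL (Fin n) k) v ≤
      Subgroup.normalizer (P : Set (GL (Fin n) k)))
    {e f : MvPolynomial (Fin n) k} (he : ∀ w ∈ W, w⁻¹ • v ≠ v → eval (w⁻¹ • v) e = 0)
    (hf : f ∈ hilbertIdeal P) : e ^ Nat.card P * translateHom (-v) f ∈ orbitIdeal W P v := by
  refine mem_orbitIdeal.mpr fun w hw => ?_
  by_cases hwv : w⁻¹ • v = v
  · have hwv' : w ∈ MulAction.stabilizer (GL (Fin n) k) v := inv_mem_iff.mp hwv
    rw [translateHom_smul_of_mem_stabilizer hwv', map_mul, translateHom_translateHom_neg]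
    exact smul_mem_hilbertIdeal_of_mem_normalizer (hP ⟨hw, hwv'⟩) (Ideal.mul_mem_left _ _ hf)
  · rw [smul_mul', smul_pow', map_mul, map_pow]
    refine Ideal.mul_mem_right _ _ (pow_card_mem_hilbertIdeal ?_)
    rw [constantCoeff_translateHom, eval_smul, he w hw hwv]

lemma hilbertIdeal_le_hilbertIdeal_inf_stabilizer [Finite W] [Finite P]
    (hP : W ⊓ MulAction.stabilizer (GL (Fin n) k) v ≤
      Subgroup.normalizer (P : Set (GL (Fin n) k)))
    (hle : orbitIdeal W P v ≤ fibreIdeal W v) :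
    hilbertIdeal P ≤ hilbertIdeal (W ⊓ MulAction.stabilizer (GL (Fin n) k) v) := by
  have hfin : ((fun w => w⁻¹ • v) '' (W : Set (GL (Fin n) k)) \ {v}).Finite :=
    ((Set.toFinite _).image _).sdiff
  obtain ⟨e, hev, he⟩ := exists_eval_ne_zero_and_eval_eq_zero hfin fun h => h.2 rfl
  have : Finite ↥(W ⊓ MulAction.stabilizer (GL (Fin n) k) v) :=
    .of_injective _ (Subgroup.inclusion_injective inf_le_left)
  intro f hf
  have hef := translateHom_mem_hilbertIdeal_of_mem_fibreIdeal le_rfl <| hle <|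
    pow_card_mul_translateHom_neg_mem_orbitIdeal hP
      (fun w hw hwv => he _ ⟨Set.mem_image_of_mem _ hw, hwv⟩) hf
  rw [map_mul, translateHom_translateHom_neg] at hef
  refine mem_hilbertIdeal_of_mul_mem ?_ hef
  rw [constantCoeff_translateHom, map_pow]
  exact pow_ne_zero _ hev

/-- With `P` generated by the reflections fixing `v`, the orbit ideal is stable under the divided
differences of `W`, hence is the fibre ideal; near `v` this says `h_P ⊆ h_{W_v}`. -/
theorem IsReflectionGroup.inf_stabilizer (hmod : (Nat.card W : k) ≠ 0) (hW : IsReflectionGroup W)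
    (v : Fin n → k) : IsReflectionGroup (W ⊓ MulAction.stabilizer (GL (Fin n) k) v) := by
  set G := W ⊓ MulAction.stabilizer (GL (Fin n) k) v
  set P := reflectionSubgroup G
  have hPG : P ≤ G := reflectionSubgroup_le G
  have hmodP := natCard_cast_ne_zero_of_le (hPG.trans inf_le_left) hmod
  have := finite_of_natCard_cast_ne_zero hmod
  have : Finite P := finite_of_natCard_cast_ne_zero hmodP
  have hst : IsDividedStable W (orbitIdeal W P v) :=
    isDividedStable_orbitIdeal fun s hsW hs hsv => Subgroup.subset_closure ⟨⟨hsW, hsv⟩, hs⟩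
  have hle : orbitIdeal W P v ≤ fibreIdeal W v :=
    le_fibreIdeal_of_isDividedStable hmod hW (fibreIdeal_le_orbitIdeal hPG) orbitIdeal_ne_top hst
  have hhilb : hilbertIdeal P ≤ hilbertIdeal G :=
    hilbertIdeal_le_hilbertIdeal_inf_stabilizer (le_normalizer_reflectionSubgroup G) hle
  exact le_antisymm hPG (le_of_hilbertIdeal_le hPG hmodP hhilb)

/-- **Steinberg's fixed point theorem**, obtained by passing to the stabilizers of finitely many
vectors with the same span as `S` in turn. -/
theorem IsReflectionGroup.inf_fixingSubgroup (hmod : (Nat.card W : k) ≠ 0)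
    (hW : IsReflectionGroup W) (S : Set (Fin n → k)) :
    IsReflectionGroup (W ⊓ fixingSubgroup (GL (Fin n) k) S) := by
  obtain ⟨T, hT, hTS⟩ := Submodule.fg_def.mp (IsNoetherian.noetherian (Submodule.span k S))
  rw [← fixingSubgroup_span (R := k), ← hTS, fixingSubgroup_span]
  clear hTS
  induction T, hT using Set.Finite.induction_on with
  | empty =>
    have htop : fixingSubgroup (GL (Fin n) k) (∅ : Set (Fin n → k)) = ⊤ := by
      ext w
      simp
    rwa [htop, inf_top_eq]
  | @insert v T _ _ ih =>
    have hmodT := natCard_cast_ne_zero_of_le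
      (inf_le_left : W ⊓ fixingSubgroup (GL (Fin n) k) T ≤ W) hmod
    have hinsert : fixingSubgroup (GL (Fin n) k) (insert v T) =
        fixingSubgroup (GL (Fin n) k) T ⊓ MulAction.stabilizer (GL (Fin n) k) v := by
      ext w
      simp [mem_fixingSubgroup_iff, and_comm]
    rw [hinsert, ← inf_assoc]
    exact ih.inf_stabilizer hmodT v

end Stabilizer

section LinearInvariants

variable {k : Type} [Field k] {n : ℕ} {K : Subgroup (GL (Fin n) k)}

lemma isParabolic_inf_fixingSubgroup (W : Subgroup (GL (Fin n) k)) (S : Set (Fin n → k)) :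
    IsParabolic (W ⊓ fixingSubgroup (GL (Fin n) k) S) W := by
  refine ⟨Submodule.span k S, ?_⟩
  rw [← fixingSubgroup_span (R := k)]
  ext w
  exact and_congr_right fun _ => mem_fixingSubgroup_iff _

lemma le_fixingSubgroup_fixedPoints {G α : Type*} [Group G] [MulAction G α] (K : Subgroup G) :
    K ≤ fixingSubgroup G (MulAction.fixedPoints K α) := fun x hx =>
  (mem_fixingSubgroup_iff _).mpr fun _ hv => hv ⟨x, hx⟩

lemma eq_zero_of_forall_mem_fixedPoints (hmod : (Nat.card K : k) ≠ 0)
    {a : MvPolynomial (Fin n) k} (ha : a.IsHomogeneous 1) (haK : a ∈ invAlg K)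
    (h : ∀ v ∈ MulAction.fixedPoints K (Fin n → k), eval v a = 0) : a = 0 := by
  have := finite_of_natCard_cast_ne_zero hmod
  have := Fintype.ofFinite K
  obtain ⟨c, rfl⟩ := exists_linearForm_eq ha
  have hcK (x : K) (v : Fin n → k) : c ⬝ᵥ (x • v) = c ⬝ᵥ v := by
    have h := eval_smul x.1 (x • v) (linearForm c)
    rwa [mem_invAlg.mp haK x x.2, ← Subgroup.coe_inv, ← Subgroup.smul_def, inv_smul_smul,
      eval_linearForm, eval_linearForm] at h
  have hfix (v : Fin n → k) : ∑ x : K, x • v ∈ MulAction.fixedPoints K (Fin n → k) := fun y => by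
    rw [Finset.smul_sum]
    exact Fintype.sum_equiv (Equiv.mulLeft y) _ _ fun x => smul_smul y x v
  have hc (v : Fin n → k) : c ⬝ᵥ v = 0 := by
    have hsum := h _ (hfix v)
    rw [eval_linearForm, dotProduct_sum, Finset.sum_congr rfl fun x _ => hcK x v,
      Finset.sum_const, Finset.card_univ, ← Nat.card_eq_fintype_card, nsmul_eq_mul] at hsum
    exact (mul_eq_zero_iff_left hmod).mp hsum
  rw [dotProduct_eq_zero c hc, map_zero]

lemma mem_invAlg_of_le_fixingSubgroup {Q : Subgroup (GL (Fin n) k)} (hKQ : K ≤ Q)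
    (hmod : (Nat.card Q : k) ≠ 0)
    (hQ : Q ≤ fixingSubgroup (GL (Fin n) k) (MulAction.fixedPoints K (Fin n → k)))
    {a : MvPolynomial (Fin n) k} (ha : a.IsHomogeneous 1) (haK : a ∈ invAlg K) :
    a ∈ invAlg Q := by
  have := finite_of_natCard_cast_ne_zero hmod
  have := Fintype.ofFinite Q
  have hdiff : (Nat.card Q : k) • a - ∑ q : Q, q • a = 0 := by
    refine eq_zero_of_forall_mem_fixedPoints (natCard_cast_ne_zero_of_le hKQ hmod) ?_
      (sub_mem (Subalgebra.smul_mem _ haK _) (invAlg_anti hKQ (sum_smul_mem_invAlg Q a)))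
      fun v hv => ?_
    · rw [smul_eq_C_mul]
      exact (ha.C_mul _).sub (IsHomogeneous.sum _ _ _ fun q _ => isHomogeneous_smul q.1 ha)
    · have hqv (q : Q) : eval v (q • a) = eval v a := by
        have hfix : (q.1)⁻¹ • v = v := (mem_fixingSubgroup_iff _).mp (hQ (Q.inv_mem q.2)) v hv
        rw [Subgroup.smul_def, eval_smul, hfix]
      rw [map_sub, map_sum, smul_eval, Finset.sum_congr rfl fun q _ => hqv q, Finset.sum_const,
        Finset.card_univ, ← Nat.card_eq_fintype_card, nsmul_eq_mul, sub_self]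
  rw [← inv_smul_smul₀ hmod a, sub_eq_zero.mp hdiff]
  exact Subalgebra.smul_mem _ (sum_smul_mem_invAlg Q a) _

end LinearInvariants

section RelativeCoinvariants

lemma IsSL.pow_ne_zero {k A : Type*} [Field k] [CommRing A] [Algebra k A] {𝒜 : ℕ → Submodule k A}
    {ℓ : A} (hℓ : IsSL 𝒜 ℓ) {d : ℕ} [Module.Finite k (𝒜 0)] [Module.Finite k (𝒜 d)]
    (h0 : 𝒜 0 ≠ ⊥) (hd : 𝒜 d ≠ ⊥) : ℓ ^ d ≠ 0 := by
  intro hzero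
  have hrank := hℓ.2 0 d
  rw [hzero, LinearMap.mulLeft_zero_eq_zero, Submodule.map_zero, finrank_bot, zero_add, eq_comm,
    Nat.min_eq_zero_iff, Submodule.finrank_eq_zero, Submodule.finrank_eq_zero] at hrank
  exact hrank.elim h0 hd

variable {k : Type} [Field k] {n : ℕ} {K Q W : Subgroup (GL (Fin n) k)}

lemma IsDividedStable.colon_singleton {I : Ideal (MvPolynomial (Fin n) k)}
    (hI : IsDividedStable W I) {b : MvPolynomial (Fin n) k} (hb : b ∈ invAlg W) :
    IsDividedStable W (I.colon {b}) := by
  intro s hs a ha f hf q hq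
  rw [Submodule.mem_colon_singleton, smul_eq_mul] at hf ⊢
  refine hI s hs a ha _ hf _ ?_
  rw [smul_mul', mem_invAlg.mp hb s hs, ← sub_mul, hq, mul_assoc]

/-- The ideal `(h_W : b)` is stable under the divided differences of `Q`, so it lies in `h_Q`. -/
lemma le_of_hilbertIdeal_le_colon (hKQ : K ≤ Q) (hQW : Q ≤ W) (hmod : (Nat.card Q : k) ≠ 0)
    (hQ : IsReflectionGroup Q) {b : MvPolynomial (Fin n) k} (hbQ : b ∈ invAlg Q)
    (hb : b ∉ hilbertIdeal W) (hK : hilbertIdeal K ≤ (hilbertIdeal W).colon {b}) : Q ≤ K := by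
  have hst : IsDividedStable Q ((hilbertIdeal W).colon {b}) :=
    IsDividedStable.colon_singleton (fun s hs => isDividedStable_hilbertIdeal W s (hQW hs)) hbQ
  have htop : (hilbertIdeal W).colon {b} ≠ ⊤ := by
    rwa [Ideal.ne_top_iff_one, Submodule.mem_colon_singleton, one_smul]
  have hcolon : (hilbertIdeal W).colon {b} ≤ hilbertIdeal Q := by
    have hQcolon := (hilbertIdeal_anti hKQ).trans hK
    rw [hilbertIdeal_eq_fibreIdeal Q] at hQcolon ⊢
    exact le_fibreIdeal_of_isDividedStable hmod hQ hQcolon htop hst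
  exact le_of_hilbertIdeal_le hKQ (natCard_cast_ne_zero_of_le hKQ hmod) (hK.trans hcolon)

lemma homogeneousComponent_mem_invAlg {f : MvPolynomial (Fin n) k} (hf : f ∈ invAlg K) (d : ℕ) :
    homogeneousComponent d f ∈ invAlg K := fun w hw => by
  change w • homogeneousComponent d f = homogeneousComponent d f
  rw [← homogeneousComponent_smul, mem_invAlg.mp hf w hw]

lemma relGrading_eq_map (K W : Subgroup (GL (Fin n) k)) (d : ℕ) :
    relGrading K W d = ((homogeneousSubmodule (Fin n) k d).comap (invAlg K).val.toLinearMap).map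
      (Ideal.Quotient.mkₐ k (relIdeal K W)).toLinearMap := by
  rw [← Submodule.span_eq (Submodule.map _ _)]
  rfl

lemma mem_relGrading {d : ℕ} {x : RelCoinvRing K W} :
    x ∈ relGrading K W d ↔ ∃ f : invAlg K, (f : MvPolynomial (Fin n) k).IsHomogeneous d ∧
      Ideal.Quotient.mk (relIdeal K W) f = x := by
  rw [relGrading_eq_map]
  rfl

instance finite_relGrading (d : ℕ) : Module.Finite k (relGrading K W d) := by
  have : Module.Finite k (homogeneousSubmodule (Fin n) k d) :=
    .of_fg (homogeneousSubmodule_fg _ _ d)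
  have hfg : ((homogeneousSubmodule (Fin n) k d).comap (invAlg K).val.toLinearMap).FG :=
    Submodule.fg_of_fg_map_injective _ Subtype.val_injective <|
      Module.Finite.iff_fg.mp (Submodule.finiteDimensional_of_le (Submodule.map_comap_le _ _))
  rw [relGrading_eq_map]
  exact .of_fg (hfg.map _)

lemma mk_eq_zero_iff_mem_hilbertIdeal {f : invAlg K} :
    Ideal.Quotient.mk (relIdeal K W) f = 0 ↔ (f : MvPolynomial (Fin n) k) ∈ hilbertIdeal W :=
  Ideal.Quotient.eq_zero_iff_mem

lemma relGrading_ne_bot_iff {d : ℕ} : relGrading K W d ≠ ⊥ ↔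
    ∃ f ∈ invAlg K, f.IsHomogeneous d ∧ f ∉ hilbertIdeal W := by
  simp only [Submodule.ne_bot_iff, mem_relGrading, Subtype.exists]
  constructor
  · rintro ⟨_, ⟨f, hfK, hf, rfl⟩, hne⟩
    exact ⟨f, hfK, hf, mt (mk_eq_zero_iff_mem_hilbertIdeal (f := ⟨f, hfK⟩)).mpr hne⟩
  · rintro ⟨f, hfK, hf, hne⟩
    exact ⟨_, ⟨f, hfK, hf, rfl⟩, mt (mk_eq_zero_iff_mem_hilbertIdeal (f := ⟨f, hfK⟩)).mp hne⟩

lemma relGrading_zero_ne_bot (K W : Subgroup (GL (Fin n) k)) : relGrading K W 0 ≠ ⊥ :=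
  relGrading_ne_bot_iff.mpr ⟨1, one_mem _, isHomogeneous_one _ _,
    (Ideal.ne_top_iff_one _).mp (hilbertIdeal_ne_top W)⟩

lemma exists_isGreatest_relGrading_ne_bot (K W : Subgroup (GL (Fin n) k)) [Finite W] :
    ∃ d, IsGreatest {d | relGrading K W d ≠ ⊥} d := by
  obtain ⟨N, hN⟩ := exists_forall_isHomogeneous_mem_hilbertIdeal W
  refine BddAbove.exists_isGreatest_of_nonempty ⟨N, fun d hd => ?_⟩ ⟨0, relGrading_zero_ne_bot K W⟩
  obtain ⟨f, -, hf, hfW⟩ := relGrading_ne_bot_iff.mp hd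
  exact le_of_not_ge fun hNd => hfW (hN d hNd f hf)

lemma hilbertIdeal_le_colon_of_isGreatest {d : ℕ}
    (hd : IsGreatest {d | relGrading K W d ≠ ⊥} d) {b : MvPolynomial (Fin n) k}
    (hb : b.IsHomogeneous d) (hbK : b ∈ invAlg K) :
    hilbertIdeal K ≤ (hilbertIdeal W).colon {b} := by
  refine Ideal.span_le.mpr fun f ⟨hfK, hf0⟩ => ?_
  rw [SetLike.mem_coe, ← sum_homogeneousComponent f]
  refine sum_mem fun i _ => Submodule.mem_colon_singleton.mpr ?_
  rcases Nat.eq_zero_or_pos i with rfl | hi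
  · rw [homogeneousComponent_zero, ← constantCoeff_eq, hf0, C_0, zero_smul]
    exact zero_mem _
  by_contra hmem
  have hle : i + d ≤ d := hd.2 <| relGrading_ne_bot_iff.mpr
    ⟨_, mul_mem (homogeneousComponent_mem_invAlg hfK i) hbK,
      (homogeneousComponent_isHomogeneous i f).mul hb, hmem⟩
  omega

/-- Let `Q` be the pointwise stabilizer of `V^K` in `W`. If the class of `ℓ ^ d` in the top degree
of `R^K_W` were nonzero, it would be `Q`-invariant and killed by `h_K`, forcing `Q = K`. -/
theorem pow_mem_hilbertIdeal_of_not_isParabolic (hKW : K ≤ W) (hmod : (Nat.card W : k) ≠ 0)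
    (hW : IsReflectionGroup W) (hpar : ¬ IsParabolic K W) {d : ℕ}
    (hd : IsGreatest {d | relGrading K W d ≠ ⊥} d) {ℓ : MvPolynomial (Fin n) k}
    (hℓ : ℓ.IsHomogeneous 1) (hℓK : ℓ ∈ invAlg K) : ℓ ^ d ∈ hilbertIdeal W := by
  by_contra hmem
  set Q := W ⊓ fixingSubgroup (GL (Fin n) k) (MulAction.fixedPoints K (Fin n → k))
  have hQW : Q ≤ W := inf_le_left
  have hKQ : K ≤ Q := le_inf hKW (le_fixingSubgroup_fixedPoints K)
  have hmodQ := natCard_cast_ne_zero_of_le hQW hmod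
  have hℓQ : ℓ ∈ invAlg Q := mem_invAlg_of_le_fixingSubgroup hKQ hmodQ inf_le_right hℓ hℓK
  have hcolon : hilbertIdeal K ≤ (hilbertIdeal W).colon {ℓ ^ d} :=
    hilbertIdeal_le_colon_of_isGreatest hd (by simpa only [one_mul] using hℓ.pow d) (pow_mem hℓK d)
  have hQK : Q ≤ K := le_of_hilbertIdeal_le_colon hKQ hQW hmodQ (hW.inf_fixingSubgroup hmod _)
    (pow_mem hℓQ d) hmem hcolon
  exact hpar (le_antisymm hKQ hQK ▸ isParabolic_inf_fixingSubgroup W _)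

theorem relCoinvariants_not_strongLefschetz_of_not_parabolic_general
    (hKW : K ≤ W) (hmod : (Nat.card W : k) ≠ 0) (hW : IsReflectionGroup W)
    (hpar : ¬ IsParabolic K W) :
    ¬ ∃ ℓ : RelCoinvRing K W, IsSL (k := k) (relGrading K W) ℓ := by
  rintro ⟨_, hSL⟩
  have := finite_of_natCard_cast_ne_zero hmod
  obtain ⟨d, hd⟩ := exists_isGreatest_relGrading_ne_bot K W
  obtain ⟨ℓ, hℓ, rfl⟩ := mem_relGrading.mp hSL.1
  refine hSL.pow_ne_zero (relGrading_zero_ne_bot K W) hd.1 ?_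
  rw [← map_pow]
  exact mk_eq_zero_iff_mem_hilbertIdeal.mpr
    (pow_mem_hilbertIdeal_of_not_isParabolic hKW hmod hW hpar hd hℓ ℓ.2)

end RelativeCoinvariants

/-- Let `V = k^n` and let `K ⊂ W ⊂ GL(V)` be finite non-modular reflection
groups (`|W|` invertible in `k`, and both `K` and `W` generated by reflections).
If `K` is not a parabolic subgroup of `W`, then the relative coinvariant ring
`R^K_W` has no strong Lefschetz element; i.e. `R^K_W` is not strong Lefschetz. -/
theorem relCoinvariants_not_strongLefschetz_of_not_parabolic
    {k : Type} [Field k] {n : ℕ}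
    (K W : Subgroup (GL (Fin n) k)) (hKW : K ≤ W) [Finite K] [Finite W]
    (hmod : (Nat.card W : k) ≠ 0)
    (hKrefl : IsReflectionGroup K) (hWrefl : IsReflectionGroup W)
    (hpar : ¬ IsParabolic K W) :
    ¬ ∃ ℓ : RelCoinvRing K W, IsSL (k := k) (relGrading K W) ℓ :=
  relCoinvariants_not_strongLefschetz_of_not_parabolic_general hKW hmod hWrefl hpar
end
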